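/- arXiv:1806.02456 — 3 statements merged into one kernel-verified Lean document; each statement's English description precedes it below -/
import Mathlib

section
/- Let u be a minimizer of the energy E. Then for every open interval J ⊆ I, the total variation of u over J is at most the total variation of f over J, i.e. eVariationOn u J ≤ eVariationOn f J. -/
open MeasureTheory Set Filter
open scoped ENNReal

noncomputable section

/-- Square-integrability of `w` on the set `S`. -/
def SqIntOn {n : ℕ} (w : ℝ → EuclideanSpace ℝ (Fin n)) (S : Set ℝ) : Prop :=
  MeasureTheory.IntegrableOn (fun x => ‖w x‖ ^ 2) S

/-- The Rudin–Osher–Fatemi energy with fidelity weight `1/(2 lam)`, datum `f`,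
on the interval `I = Ioo a b`. -/
def rofEnergy {n : ℕ} (lam a b : ℝ) (f w : ℝ → EuclideanSpace ℝ (Fin n)) : ℝ≥0∞ :=
  eVariationOn w (Set.Ioo a b) +
    ENNReal.ofReal ((1 / (2 * lam)) * ∫ x in Set.Ioo a b, ‖w x - f x‖ ^ 2)

/-- `u` is a minimizer of the ROF energy among Borel measurable functions
square-integrable on `Ioo a b`. -/
def IsMinimizer {n : ℕ} (lam a b : ℝ) (f u : ℝ → EuclideanSpace ℝ (Fin n)) : Prop :=
  Measurable u ∧ SqIntOn u (Set.Ioo a b) ∧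
    ∀ w : ℝ → EuclideanSpace ℝ (Fin n), Measurable w → SqIntOn w (Set.Ioo a b) →
      rofEnergy lam a b f u ≤ rofEnergy lam a b f w


open scoped RealInnerProductSpace in
lemma rof_firstVar {n : ℕ} {a b lam : ℝ} (hlam : 0 < lam)
    {f u : ℝ → EuclideanSpace ℝ (Fin n)} (hf_meas : Measurable f)
    (hf_sq : SqIntOn f (Set.Ioo a b)) (hu : IsMinimizer lam a b f u)
    (hV : eVariationOn u (Ioo a b) ≠ ∞)
    (φ : ℝ → EuclideanSpace ℝ (Fin n)) (hφ : Measurable φ) (hφs : SqIntOn φ (Ioo a b)) (K : ℝ)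
    (h : ∀ τ : ℝ, 0 < τ → τ < 1 → eVariationOn (fun x => u x + τ • φ x) (Ioo a b) ≠ ∞ ∧
      (eVariationOn (fun x => u x + τ • φ x) (Ioo a b)).toReal
        ≤ (eVariationOn u (Ioo a b)).toReal + τ * K) :
    -(1 / lam * ∫ x in Ioo a b, ⟪u x - f x, φ x⟫) ≤ K := by
  obtain ⟨hum, hus, hmin⟩ := hu
  have mf : MemLp f 2 (volume.restrict (Ioo a b)) :=
    (memLp_two_iff_integrable_sq_norm hf_meas.aestronglyMeasurable).2 hf_sq
  have mu : MemLp u 2 (volume.restrict (Ioo a b)) :=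
    (memLp_two_iff_integrable_sq_norm hum.aestronglyMeasurable).2 hus
  have mφ : MemLp φ 2 (volume.restrict (Ioo a b)) :=
    (memLp_two_iff_integrable_sq_norm hφ.aestronglyMeasurable).2 hφs
  have mg : MemLp (fun x => u x - f x) 2 (volume.restrict (Ioo a b)) := mu.sub mf
  have ig := (memLp_two_iff_integrable_sq_norm mg.1).1 mg
  have ii : Integrable (fun x => ⟪u x - f x, φ x⟫) (volume.restrict (Ioo a b)) := by
    refine Integrable.mono' (ig.add hφs) (mg.1.inner mφ.1) (Eventually.of_forall fun x => ?_)
    have := abs_real_inner_le_norm (u x - f x) (φ x)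
    simp only [Real.norm_eq_abs, Pi.add_apply]
    nlinarith [sq_nonneg (‖u x - f x‖ - ‖φ x‖), sq_nonneg (‖u x - f x‖), sq_nonneg (‖φ x‖)]
  set A := ∫ x in Ioo a b, ⟪u x - f x, φ x⟫ with hA
  set B := ∫ x in Ioo a b, ‖φ x‖ ^ 2 with hB
  have hB0 : 0 ≤ B := integral_nonneg fun x => by positivity
  have key : ∀ τ : ℝ, 0 < τ → τ < 1 → 0 ≤ K + 1 / lam * A + τ * (1 / (2 * lam) * B) := by
    intro τ h0 h1
    obtain ⟨hfin, hle⟩ := h τ h0 h1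
    have mw : MemLp (fun x => u x + τ • φ x) 2 (volume.restrict (Ioo a b)) :=
      mu.add (mφ.const_smul τ)
    have hm := hmin (fun x => u x + τ • φ x) (hum.add (hφ.const_smul τ))
      ((memLp_two_iff_integrable_sq_norm mw.1).1 mw)
    unfold rofEnergy at hm
    have e1 : ∫ x in Ioo a b, ‖u x + τ • φ x - f x‖ ^ 2
        = (∫ x in Ioo a b, ‖u x - f x‖ ^ 2) + 2 * τ * A + τ ^ 2 * B := by
      rw [hA, hB, ← integral_const_mul, ← integral_const_mul, ← integral_add ig (ii.const_mul _),
        ← integral_add (f := fun x => ‖u x - f x‖ ^ 2 + 2 * τ * ⟪u x - f x, φ x⟫)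
          (ig.add (ii.const_mul _)) (Integrable.const_mul hφs _)]
      refine integral_congr_ae (Eventually.of_forall fun x => ?_)
      simp only
      rw [show u x + τ • φ x - f x = (u x - f x) + τ • φ x by abel, norm_add_sq_real,
        inner_smul_right, norm_smul, mul_pow, Real.norm_eq_abs, sq_abs]
      ring
    have hm2 := ENNReal.toReal_mono (by finiteness) hm
    rw [ENNReal.toReal_add hV (by finiteness), ENNReal.toReal_add hfin (by finiteness),
      ENNReal.toReal_ofReal, ENNReal.toReal_ofReal, e1] at hm2
    · have : 0 ≤ τ * (K + 1 / lam * A + τ * (1 / (2 * lam) * B)) := by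
        have : 1 / (2 * lam) * ((∫ x in Ioo a b, ‖u x - f x‖ ^ 2) + 2 * τ * A + τ ^ 2 * B)
          = 1 / (2 * lam) * (∫ x in Ioo a b, ‖u x - f x‖ ^ 2) + τ * (1 / lam * A)
            + τ ^ 2 * (1 / (2 * lam) * B) := by field_simp
        rw [this] at hm2
        nlinarith
      exact nonneg_of_mul_nonneg_right this h0
    · exact mul_nonneg (by positivity) (integral_nonneg fun x => by positivity)
    · exact mul_nonneg (by positivity) (integral_nonneg fun x => by positivity)
  by_contra hcon
  push Not at hcon
  set C := 1 / (2 * lam) * B with hC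
  have hC0 : 0 ≤ C := by positivity
  set D := -(K + 1 / lam * A) with hD
  have hD0 : 0 < D := by rw [hD]; linarith
  have hk := key (min (1/2) (D / (2 * (C + 1)))) (by positivity) (by
    exact lt_of_le_of_lt (min_le_left _ _) (by norm_num))
  have h2 : min (1/2) (D / (2 * (C + 1))) * C ≤ D / (2 * (C + 1)) * C :=
    mul_le_mul_of_nonneg_right (min_le_right _ _) hC0
  have h3 : D / (2 * (C + 1)) * C < D := by
    rw [div_mul_eq_mul_div, div_lt_iff₀ (by positivity)]
    nlinarith
  linarith

lemma eVariationOn_add_le' {E : Type*} [SeminormedAddCommGroup E] (f g : ℝ → E) (s : Set ℝ) :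
    eVariationOn (fun x => f x + g x) s ≤ eVariationOn f s + eVariationOn g s := by
  refine iSup_le fun ⟨m, ⟨p, hp, hps⟩⟩ => ?_
  calc _ ≤ ∑ i ∈ Finset.range m, (edist (f (p (i+1))) (f (p i)) + edist (g (p (i+1))) (g (p i))) :=
        Finset.sum_le_sum fun i _ => edist_add_add_le _ _ _ _
    _ ≤ _ := by
        rw [Finset.sum_add_distrib]
        exact add_le_add (eVariationOn.sum_le hp hps) (eVariationOn.sum_le hp hps)

lemma eVariationOn_step_le {E : Type*} [SeminormedAddCommGroup E] (v : E) (x : ℝ) (s : Set ℝ) :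
    eVariationOn ((Iic x).indicator fun _ => v) s ≤ ENNReal.ofReal ‖v‖ := by
  have h : ((Iic x).indicator fun _ => v) =
      (fun r : ℝ => if r = 0 then v else 0) ∘ (fun y : ℝ => if y ≤ x then (0:ℝ) else 1) := by
    funext y
    by_cases hy : y ≤ x <;> simp [hy]
  rw [h]
  refine (eVariationOn.comp_le_of_monotoneOn _ (t := s) (s := {(0:ℝ), 1}) _ ?_ ?_).trans ?_
  · intro y _ y' _ hyy
    by_cases h1 : y ≤ x <;> by_cases h2 : y' ≤ x <;> simp [h1, h2]
    linarith
  · intro y _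
    by_cases h1 : y ≤ x <;> simp [h1]
  · rw [eVariationOn.pair]
    simp [edist_dist]

open scoped RealInnerProductSpace in
lemma rof_dual {n : ℕ} {a b lam : ℝ} (hlam : 0 < lam)
    {f u : ℝ → EuclideanSpace ℝ (Fin n)} (hf_meas : Measurable f)
    (hf_sq : SqIntOn f (Set.Ioo a b)) (hu : IsMinimizer lam a b f u) :
    eVariationOn u (Ioo a b) ≠ ∞ ∧ ∃ k : ℝ → EuclideanSpace ℝ (Fin n), Integrable k ∧
      (∀ x ∈ Ioo a b, u x - f x = lam • k x) ∧
      (∀ x, ‖∫ y in Iic x, k y‖ ≤ 1) ∧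
      (∀ s ∈ Ioo a b, ∀ t ∈ Ioo a b, s ≤ t → (eVariationOn u (Icc s t)).toReal ≤
        ⟪∫ y in Iic s, k y, u t - u s⟫ + ∫ y in s..t, ⟪k y, u t - u y⟫) := by
  have hfirst := rof_firstVar hlam hf_meas hf_sq hu
  obtain ⟨hum, hus, hmin⟩ := hu
  have hV : eVariationOn u (Ioo a b) ≠ ∞ := by
    have h0 := hmin (fun _ => 0) measurable_const (by simp [SqIntOn])
    refine ne_top_of_le_ne_top ?_ (le_self_add.trans h0)
    unfold rofEnergy
    rw [eVariationOn.constant_on (by rintro _ ⟨_, _, rfl⟩ _ ⟨_, _, rfl⟩; rfl)]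
    finiteness
  replace hfirst := hfirst hV
  have mf : MemLp f 2 (volume.restrict (Ioo a b)) :=
    (memLp_two_iff_integrable_sq_norm hf_meas.aestronglyMeasurable).2 hf_sq
  have mu : MemLp u 2 (volume.restrict (Ioo a b)) :=
    (memLp_two_iff_integrable_sq_norm hum.aestronglyMeasurable).2 hus
  have mg : MemLp (fun x => u x - f x) 2 (volume.restrict (Ioo a b)) := mu.sub mf
  have hgi : IntegrableOn (fun x => u x - f x) (Ioo a b) := mg.integrable (by norm_num)
  set k : ℝ → EuclideanSpace ℝ (Fin n) := (Ioo a b).indicator (fun x => lam⁻¹ • (u x - f x)) with hk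
  have hki : Integrable k := (integrable_indicator_iff measurableSet_Ioo).2 (hgi.smul lam⁻¹)
  have hconv : ∀ φ : ℝ → EuclideanSpace ℝ (Fin n),
      (1 / lam * ∫ x in Ioo a b, ⟪u x - f x, φ x⟫) = ∫ x, ⟪k x, φ x⟫ := by
    intro φ
    rw [← integral_const_mul, ← integral_indicator measurableSet_Ioo]
    congr 1; funext x
    by_cases hx : x ∈ Ioo a b
    · simp [hk, hx, real_inner_smul_left]
    · simp [hk, hx]
  refine ⟨hV, k, hki, ?_, ?_, ?_⟩
  · intro x hx
    simp [hk, hx, smul_smul, hlam.ne']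
  · intro x
    set q := ∫ y in Iic x, k y with hq
    have := hfirst ((Iic x).indicator fun _ => -q) (measurable_const.indicator measurableSet_Iic)
      (by
        refine Integrable.mono' (g := fun _ => ‖q‖ ^ 2) (by simp) ?_ ?_
        · exact ((measurable_const.indicator measurableSet_Iic).norm.pow_const 2).aestronglyMeasurable
        · refine Eventually.of_forall fun y => ?_
          by_cases hy : y ≤ x <;> simp [hy])
      ‖q‖ (by
        intro τ h0 h1
        have h2 := eVariationOn_add_le' u (fun y => τ • (Iic x).indicator (fun _ => -q) y) (Ioo a b)
        have h3 : eVariationOn (fun y => τ • (Iic x).indicator (fun _ => -q) y) (Ioo a b)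
            ≤ ENNReal.ofReal (τ * ‖q‖) := by
          have := eVariationOn_step_le (τ • (-q)) x (Ioo a b)
          rw [norm_smul, norm_neg, Real.norm_of_nonneg h0.le] at this
          have e : (fun y => τ • (Iic x).indicator (fun _ => -q) y)
              = (Iic x).indicator (fun _ => τ • (-q)) := by
            funext y
            by_cases hy : y ≤ x <;> simp [hy]
          rw [e]
          exact this
        have h4 := h2.trans (add_le_add_right h3 _)
        have h5 := ENNReal.toReal_mono (by finiteness) h4
        rw [ENNReal.toReal_add hV (by finiteness), ENNReal.toReal_ofReal (by positivity)] at h5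
        exact ⟨ne_top_of_le_ne_top (by finiteness) h4, h5⟩)
    rw [hconv] at this
    have e : ∫ y, ⟪k y, (Iic x).indicator (fun _ => -q) y⟫ = - ⟪q, q⟫ := by
      have : (fun y => ⟪k y, (Iic x).indicator (fun _ => -q) y⟫)
        = (Iic x).indicator (fun y => ⟪-q, k y⟫) := by
        funext y
        by_cases hy : y ≤ x <;> simp [hy, real_inner_comm]
      rw [this, integral_indicator measurableSet_Iic, integral_inner hki.integrableOn, ← hq,
        inner_neg_left]
    rw [e, neg_neg, real_inner_self_eq_norm_sq] at this
    nlinarith [norm_nonneg q]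
  · intro s hs t ht hst
    have hsub : Icc s t ⊆ Ioo a b := fun y hy => ⟨hs.1.trans_le hy.1, hy.2.trans_lt ht.2⟩
    have hfin : ∀ S ⊆ Ioo a b, eVariationOn u S ≠ ∞ := fun S hS =>
      ne_top_of_le_ne_top hV (eVariationOn.mono u hS)
    set V := (eVariationOn u (Icc s t)).toReal with hVdef
    have hcl : ∀ x, max s (min x t) ∈ Icc s t := fun x =>
      ⟨le_max_left _ _, max_le hst (min_le_right _ _)⟩
    set φ : ℝ → EuclideanSpace ℝ (Fin n) := fun x => u t - u (max s (min x t)) with hφ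
    have hφm : Measurable φ := by
      apply measurable_const.sub
      exact hum.comp (measurable_const.max (measurable_id.min measurable_const))
    have hφb : ∀ x, ‖φ x‖ ≤ V := fun x => by
      rw [hφ, ← dist_eq_norm]
      exact BoundedVariationOn.dist_le (hfin _ hsub) ⟨hst, le_rfl⟩ (hcl x)
    have hφ1 : ∀ x ≤ s, φ x = u t - u s := fun x hx => by
      simp [hφ, min_eq_left (hx.trans hst), max_eq_left hx]
    have hφ2 : ∀ x ∈ Icc s t, φ x = u t - u x := fun x hx => by
      simp [hφ, min_eq_left hx.2, max_eq_right hx.1]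
    have hφ3 : ∀ x, t ≤ x → φ x = 0 := fun x hx => by
      simp [hφ, min_eq_right hx, max_eq_right hst]
    have hsplit : ∀ w : ℝ → EuclideanSpace ℝ (Fin n), eVariationOn w (Ioo a b) =
        eVariationOn w (Ioc a s) + eVariationOn w (Icc s t) + eVariationOn w (Ico t b) := by
      intro w
      have e1 : Ioo a b = (Ioc a s ∪ Icc s t) ∪ Ico t b := by
        ext y
        simp only [mem_Ioo, mem_union, mem_Ioc, mem_Icc, mem_Ico]
        have := hs.1; have := ht.2
        constructor
        · rintro ⟨h1, h2⟩
          rcases le_total y s with h | h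
          · exact Or.inl (Or.inl ⟨h1, h⟩)
          · rcases le_total y t with h' | h'
            · exact Or.inl (Or.inr ⟨h, h'⟩)
            · exact Or.inr ⟨h', h2⟩
        · rintro ((⟨h1, h2⟩ | ⟨h1, h2⟩) | ⟨h1, h2⟩) <;> constructor <;> linarith
      rw [e1, eVariationOn.union w (x := t), eVariationOn.union w (x := s)]
      · exact ⟨⟨hs.1, le_rfl⟩, fun y hy => hy.2⟩
      · exact ⟨⟨le_rfl, hst⟩, fun y hy => hy.1⟩
      · refine ⟨Or.inr ⟨hst, le_rfl⟩, ?_⟩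
        rintro y (hy | hy)
        · exact hy.2.trans hst
        · exact hy.2
      · exact ⟨⟨le_rfl, ht.2⟩, fun y hy => hy.1⟩
    have main := hfirst φ hφm (by
        refine Integrable.mono' (g := fun _ => V ^ 2) (by simp) (hφm.norm.pow_const 2).aestronglyMeasurable ?_
        refine Eventually.of_forall fun y => ?_
        rw [norm_pow, norm_norm]
        exact pow_le_pow_left₀ (norm_nonneg _) (hφb y) 2) (-V) (by
      intro τ h0 h1
      have c1 : eVariationOn (fun x => u x + τ • φ x) (Ioc a s) = eVariationOn u (Ioc a s) := by
        rw [eVariationOn.congr (g := fun x => u x + τ • (u t - u s))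
          (fun x hx => by simp only [hφ1 x hx.2])]
        simp [eVariationOn]
      have c3 : eVariationOn (fun x => u x + τ • φ x) (Ico t b) = eVariationOn u (Ico t b) :=
        eVariationOn.congr (fun x hx => by simp only [hφ3 x hx.1]; simp)
      have c2 : eVariationOn (fun x => u x + τ • φ x) (Icc s t)
          ≤ ENNReal.ofReal (1 - τ) * eVariationOn u (Icc s t) := by
        rw [eVariationOn.congr (g := (fun e => (1 - τ) • e + τ • u t) ∘ u)
          (fun x hx => by simp only [hφ2 x hx, Function.comp]; module)]
        refine LipschitzOnWith.comp_eVariationOn_le (C := (1 - τ).toNNReal) (t := univ) ?_ (fun _ _ => trivial)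
        refine LipschitzOnWith.of_dist_le_mul fun x _ y _ => ?_
        rw [dist_add_right, dist_smul₀, Real.norm_of_nonneg (by linarith), Real.coe_toNNReal _ (by linarith)]
      have hA := hfin (Ioc a s) (fun y hy => ⟨hy.1, hy.2.trans_lt hs.2⟩)
      have hC := hfin (Ico t b) (fun y hy => ⟨ht.1.trans_le hy.1, hy.2⟩)
      have hB := hfin _ hsub
      have hB' : eVariationOn (fun x => u x + τ • φ x) (Icc s t) ≠ ∞ :=
        ne_top_of_le_ne_top (by finiteness) c2
      rw [hsplit, hsplit u, c1, c3]
      refine ⟨by finiteness, ?_⟩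
      rw [ENNReal.toReal_add (by finiteness) hC, ENNReal.toReal_add hA hB',
        ENNReal.toReal_add (by finiteness) hC, ENNReal.toReal_add hA hB]
      have := ENNReal.toReal_mono (by finiteness) c2
      rw [ENNReal.toReal_mul, ENNReal.toReal_ofReal (by linarith), ← hVdef] at this
      linarith)
    rw [hconv] at main
    have hii : Integrable (fun x => ⟪k x, φ x⟫) := by
      refine Integrable.mono' (hki.norm.mul_const V)
        (hki.aestronglyMeasurable.inner hφm.aestronglyMeasurable) (Eventually.of_forall fun x => ?_)
      exact (norm_inner_le_norm _ _).trans (mul_le_mul_of_nonneg_left (hφb x) (norm_nonneg _))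
    have e1 : ∫ x, ⟪k x, φ x⟫ = (∫ x in Iic t, ⟪k x, φ x⟫) := by
      symm
      refine setIntegral_eq_integral_of_forall_compl_eq_zero fun x hx => ?_
      rw [hφ3 x (not_le.1 hx).le, inner_zero_right]
    have e2 := intervalIntegral.integral_Iic_sub_Iic (a := s) (b := t) hii.integrableOn hii.integrableOn
    have e3 : ∫ x in Iic s, ⟪k x, φ x⟫ = ⟪∫ y in Iic s, k y, u t - u s⟫ := by
      rw [real_inner_comm, ← integral_inner hki.integrableOn]
      refine setIntegral_congr_fun measurableSet_Iic fun x hx => ?_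
      simp only [hφ1 x hx, real_inner_comm]
    have e4 : ∫ x in s..t, ⟪k x, φ x⟫ = ∫ y in s..t, ⟪k y, u t - u y⟫ := by
      refine intervalIntegral.integral_congr fun x hx => ?_
      rw [uIcc_of_le hst] at hx
      simp only [hφ2 x hx]
    linarith

lemma concave_of_local {H : ℝ → ℝ} {α β : ℝ} (hc : ContinuousOn H (Icc α β))
    (hloc : ∀ p ∈ Ioo α β, ∃ δ > 0, ∀ h, 0 < h → h < δ → H (p + h) + H (p - h) ≤ 2 * H p) :
    ConcaveOn ℝ (Icc α β) H := by
  have key : ∀ x ∈ Icc α β, ∀ y ∈ Icc α β, x < y → ∀ q ∈ Icc x y,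
      ∀ A B : ℝ, A * x + B = H x → A * y + B = H y → A * q + B ≤ H q := by
    intro x hx y hy hxy q hq A B hAx hAy
    set D : ℝ → ℝ := fun r => H r - (A * r + B) with hD
    have hsub : Icc x y ⊆ Icc α β := Icc_subset_Icc hx.1 hy.2
    have hDc : ContinuousOn D (Icc x y) := (hc.mono hsub).sub (by fun_prop)
    obtain ⟨m, hm, hmin⟩ := isCompact_Icc.exists_isMinOn (nonempty_Icc.2 hxy.le) hDc
    by_contra hcon
    push Not at hcon
    have hneg : D m < 0 := lt_of_le_of_lt (hmin hq) (by simp only [hD]; linarith)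
    set S := {r ∈ Icc x y | D r = D m} with hS
    have hSc : IsCompact S := by
      have : S = Icc x y ∩ D ⁻¹' {D m} := by ext r; simp [hS]
      rw [this]
      exact isCompact_Icc.of_isClosed_subset
        (hDc.preimage_isClosed_of_isClosed isClosed_Icc isClosed_singleton) inter_subset_left
    obtain ⟨p, hp, hpl⟩ := hSc.exists_isLeast ⟨m, hm, rfl⟩
    have hDx : D x = 0 := by simp only [hD]; linarith
    have hDy : D y = 0 := by simp only [hD]; linarith
    have hpx : x < p := lt_of_le_of_ne hp.1.1 (by rintro rfl; linarith [hp.2])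
    have hpy : p < y := lt_of_le_of_ne hp.1.2 (by rintro rfl; linarith [hp.2])
    obtain ⟨δ, hδ, hh⟩ := hloc p ⟨hx.1.trans_lt hpx, hpy.trans_le hy.2⟩
    set h := min (δ / 2) (min (p - x) (y - p)) with hhd
    have h1 : h ≤ δ / 2 := min_le_left _ _
    have h2 : h ≤ p - x := (min_le_right _ _).trans (min_le_left _ _)
    have h3 : h ≤ y - p := (min_le_right _ _).trans (min_le_right _ _)
    have h0 : 0 < h := lt_min (by linarith) (lt_min (by linarith) (by linarith))
    have hH := hh h h0 (by linarith)
    have a1 : D m ≤ D (p + h) := hmin ⟨by linarith, by linarith⟩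
    have a2 : D m ≤ D (p - h) := hmin ⟨by linarith, by linarith⟩
    have a3 : D (p - h) ≠ D m := by
      intro he
      have := hpl (show p - h ∈ S from ⟨⟨by linarith, by linarith⟩, he⟩)
      linarith
    have a4 := lt_of_le_of_ne a2 a3.symm
    have a5 := hp.2
    simp only [hD] at a1 a4 a5
    linarith
  refine concaveOn_of_slope_anti_adjacent (convex_Icc _ _) ?_
  intro x y z hx hz hxy hyz
  set A := (H z - H x) / (z - x) with hA
  have hA' : A * (z - x) = H z - H x := div_mul_cancel₀ _ (by linarith)
  have := key x hx z hz (hxy.trans hyz) y ⟨hxy.le, hyz.le⟩ A (H x - A * x) (by ring) (by linarith)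
  have l1 : (H z - H y) / (z - y) ≤ A := by
    rw [div_le_iff₀ (by linarith)]; linarith
  have l2 : A ≤ (H y - H x) / (y - x) := by
    rw [le_div_iff₀ (by linarith)]; linarith
  exact l1.trans l2

/-- if `G` is integrable and locally has nonpositive symmetric increments in the mean, then
it decreases in the mean. -/
lemma exists_le_of_mean {G : ℝ → ℝ} {c d : ℝ}
    (hG : ∀ x ∈ Ioo c d, ∀ y ∈ Ioo c d, IntervalIntegrable G volume x y)
    (hloc : ∀ p ∈ Ioo c d, ∃ δ > 0, ∀ h, 0 < h → h < δ →
      ∫ y in (0:ℝ)..h, (G (p + y) - G (p - y)) ≤ 0)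
    {s t : ℝ} (hs : s ∈ Ioo c d) (ht : t ∈ Ioo c d) (hst : s ≤ t) :
    ∃ s' ∈ Ioo c d, ∃ t' ∈ Ioo c d, s' ≤ s ∧ t ≤ t' ∧ G t' ≤ G s' := by
  obtain ⟨η, hη, hη1, hη2⟩ : ∃ η > 0, c < s - η ∧ t + η < d := by
    refine ⟨min (s - c) (d - t) / 2, ?_, ?_, ?_⟩
    · have : 0 < min (s - c) (d - t) := lt_min (by linarith [hs.1]) (by linarith [ht.2])
      linarith
    · have := min_le_left (s - c) (d - t); linarith [hs.1]
    · have := min_le_right (s - c) (d - t); linarith [ht.2]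
  set H : ℝ → ℝ := fun x => ∫ y in (s - η)..x, G y with hH
  have m0 : s - η ∈ Ioo c d := ⟨hη1, by linarith [hs.2]⟩
  have m1 : t + η ∈ Ioo c d := ⟨by linarith [ht.1], hη2⟩
  have hHsub : ∀ x ∈ Ioo c d, ∀ y ∈ Ioo c d, H y - H x = ∫ r in x..y, G r := fun x hx y hy =>
    intervalIntegral.integral_interval_sub_left (hG _ m0 _ hy) (hG _ m0 _ hx)
  have hcont : ContinuousOn H (Icc (s - η) (t + η)) := by
    have := intervalIntegral.continuousOn_primitive_interval' (hG _ m0 _ m1) left_mem_uIcc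
    rwa [uIcc_of_le (by linarith)] at this
  have hconc := concave_of_local hcont (by
    intro p hp
    have hpm : p ∈ Ioo c d := ⟨by linarith [hp.1], by linarith [hp.2]⟩
    obtain ⟨δ, hδ, hh⟩ := hloc p hpm
    refine ⟨min δ (min (p - (s - η)) (t + η - p)), lt_min hδ (lt_min (by linarith [hp.1]) (by linarith [hp.2])), ?_⟩
    intro h h0 h1
    have b1 := h1.trans_le (min_le_left _ _)
    have b2 := (h1.trans_le (min_le_right _ _)).trans_le (min_le_left _ _)
    have b3 := (h1.trans_le (min_le_right _ _)).trans_le (min_le_right _ _)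
    have n1 : p + h ∈ Ioo c d := ⟨by linarith [hpm.1], by linarith⟩
    have n2 : p - h ∈ Ioo c d := ⟨by linarith, by linarith [hpm.2]⟩
    have i1 : IntervalIntegrable (fun y => G (p + y)) volume 0 h := by
      have := (hG _ hpm _ n1).comp_add_left p
      simpa using this
    have i2 : IntervalIntegrable (fun y => G (p - y)) volume 0 h := by
      have := (hG _ hpm _ n2).comp_sub_left p
      simpa using this
    have := hh h h0 b1
    rw [intervalIntegral.integral_sub i1 i2, intervalIntegral.integral_comp_add_left,
      intervalIntegral.integral_comp_sub_left, add_zero, sub_zero,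
      ← hHsub _ hpm _ n1, ← hHsub _ n2 _ hpm] at this
    linarith)
  have e : H (t + η) - H t ≤ H s - H (s - η) := by
    rcases eq_or_lt_of_le hst with rfl | hlt
    · have := hconc.slope_anti_adjacent (x := s - η) (y := s) (z := s + η)
        ⟨le_rfl, by linarith⟩ ⟨by linarith, le_rfl⟩ (by linarith) (by linarith)
      simp only [add_sub_cancel_left, sub_sub_cancel] at this
      rwa [div_le_div_iff_of_pos_right hη] at this
    · have t1 := hconc.slope_anti_adjacent (x := s - η) (y := s) (z := t)
        ⟨le_rfl, by linarith⟩ ⟨by linarith, by linarith⟩ (by linarith) (by linarith)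
      have t2 := hconc.slope_anti_adjacent (x := s) (y := t) (z := t + η)
        ⟨by linarith, by linarith⟩ ⟨by linarith, by linarith⟩ (by linarith) (by linarith)
      have this := t2.trans t1
      simp only [add_sub_cancel_left, sub_sub_cancel] at this
      rwa [div_le_div_iff_of_pos_right hη] at this
  by_contra hcon
  push Not at hcon
  have q1 : IntervalIntegrable (fun y => G (t + y)) volume 0 η := by
    have := (hG _ ht _ m1).comp_add_left t
    simpa using this
  have q2 : IntervalIntegrable (fun y => G (s - η + y)) volume 0 η := by
    have := (hG _ m0 _ hs).comp_add_left (s - η)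
    simpa using this
  have hlt : ∫ y in (0:ℝ)..η, G (s - η + y) < ∫ y in (0:ℝ)..η, G (t + y) := by
    refine intervalIntegral.integral_lt_integral_of_ae_le_of_measure_setOfPred_lt_ne_zero hη.le q2 q1 ?_ ?_
    · filter_upwards [ae_restrict_mem measurableSet_Ioc] with y hy
      exact (hcon _ ⟨by linarith [hy.1], by linarith [hy.2, hs.2]⟩ _ ⟨by linarith [hy.1, ht.1], by linarith [hy.2]⟩
        (by linarith [hy.2]) (by linarith [hy.1])).le
    · have : Ioc 0 η ⊆ {y | G (s - η + y) < G (t + y)} := fun y hy =>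
        hcon _ ⟨by linarith [hy.1], by linarith [hy.2, hs.2]⟩ _ ⟨by linarith [hy.1, ht.1], by linarith [hy.2]⟩
          (by linarith [hy.2]) (by linarith [hy.1])
      have h2 : volume.restrict (Ioc 0 η) (Ioc 0 η) ≤ _ := measure_mono this
      intro h0
      rw [h0] at h2
      simp at h2
      linarith
  rw [intervalIntegral.integral_comp_add_left, intervalIntegral.integral_comp_add_left,
    add_zero, add_zero, sub_add_cancel, ← hHsub _ m0 _ hs, ← hHsub _ ht _ m1] at hlt
  linarith

open scoped RealInnerProductSpace in
lemma rof_align {E : Type*} [NormedAddCommGroup E] [InnerProductSpace ℝ E] [CompleteSpace E]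
    {u k : ℝ → E} {s t p : ℝ} (hk : Integrable k)
    (hs : s ≤ p) (ht : p ≤ t) (hV : eVariationOn u (Icc s t) ≠ ∞)
    (h : (eVariationOn u (Icc s t)).toReal ≤
        ⟪∫ y in Iic s, k y, u t - u s⟫ + ∫ y in s..t, ⟪k y, u t - u y⟫) :
    (1 - 2 * ∫ y in s..t, ‖k y‖) * (eVariationOn u (Icc s t)).toReal
      ≤ ⟪∫ y in Iic p, k y, u t - u s⟫ := by
  set V := (eVariationOn u (Icc s t)).toReal with hVd
  have hst := hs.trans ht
  have hd : ∀ y ∈ Icc s t, ‖u t - u y‖ ≤ V := fun y hy => by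
    rw [← dist_eq_norm]
    exact BoundedVariationOn.dist_le hV ⟨hst, le_rfl⟩ hy
  have ii : ∀ x y, IntervalIntegrable (fun y => ‖k y‖) volume x y :=
    fun x y => hk.norm.intervalIntegrable
  have b1 : ∫ y in s..t, ⟪k y, u t - u y⟫ ≤ (∫ y in s..t, ‖k y‖) * V := by
    rw [← intervalIntegral.integral_mul_const]
    refine (le_abs_self _).trans (intervalIntegral.abs_integral_le_integral_abs hst |>.trans ?_)
    rw [intervalIntegral.integral_of_le hst, intervalIntegral.integral_of_le hst]
    refine integral_mono_of_nonneg (Eventually.of_forall fun _ => abs_nonneg _)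
      (hk.norm.mul_const V).integrableOn ?_
    filter_upwards [ae_restrict_mem measurableSet_Ioc] with y hy
    exact (abs_real_inner_le_norm _ _).trans
      (mul_le_mul_of_nonneg_left (hd y ⟨hy.1.le, hy.2⟩) (norm_nonneg _))
  have e2 := intervalIntegral.integral_Iic_sub_Iic (a := s) (b := p) hk.integrableOn hk.integrableOn
  have b2 : ⟪∫ y in Iic s, k y, u t - u s⟫ - ⟪∫ y in Iic p, k y, u t - u s⟫
      ≤ (∫ y in s..t, ‖k y‖) * V := by
    rw [← inner_sub_left]
    refine (real_inner_le_norm _ _).trans ?_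
    rw [norm_sub_rev, e2]
    have n1 := intervalIntegral.norm_integral_le_integral_norm (f := k) (μ := volume) hs
    have n2 : ∫ y in s..p, ‖k y‖ ≤ ∫ y in s..t, ‖k y‖ := by
      rw [← intervalIntegral.integral_add_adjacent_intervals (ii s p) (ii p t)]
      have : 0 ≤ ∫ y in p..t, ‖k y‖ := intervalIntegral.integral_nonneg ht fun _ _ => norm_nonneg _
      linarith
    exact mul_le_mul (n1.trans n2) (hd s ⟨le_rfl, hst⟩) (norm_nonneg _)
      (intervalIntegral.integral_nonneg hst fun _ _ => norm_nonneg _)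
  nlinarith

/-- the total variation of the ROF minimizer over any open
subinterval `J = Ioo c d` of `I` is at most that of the datum `f` over `J`. -/
theorem tv_minimizer_le_tv_datum_on_open_subintervals
    {n : ℕ} (hn : 1 ≤ n) (a b : ℝ) (hab : a < b) (lam : ℝ) (hlam : 0 < lam)
    (f : ℝ → EuclideanSpace ℝ (Fin n)) (hf_meas : Measurable f)
    (hf_sq : SqIntOn f (Set.Ioo a b))
    (u : ℝ → EuclideanSpace ℝ (Fin n)) (hu : IsMinimizer lam a b f u)
    (c d : ℝ) (hJ : Set.Ioo c d ⊆ Set.Ioo a b) :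
    eVariationOn u (Set.Ioo c d) ≤ eVariationOn f (Set.Ioo c d) := by
  classical
  obtain ⟨huV, k, hk, hkuf, hz1, hC⟩ := rof_dual hlam hf_meas hf_sq hu
  by_contra hcon
  push Not at hcon
  have hfV : BoundedVariationOn f (Ioo c d) := hcon.ne_top
  have huJ : BoundedVariationOn u (Ioo c d) := ne_top_of_le_ne_top huV (eVariationOn.mono u hJ)
  obtain ⟨s, hs, t, ht, hst, hlt⟩ := eVariationOn.exists_lt_eVariationOn_inter_Icc hcon
  have hinter : ∀ x ∈ Ioo c d, ∀ y ∈ Ioo c d, Ioo c d ∩ Icc x y = Icc x y := fun x hx y hy =>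
    inter_eq_right.2 fun r hr => ⟨hx.1.trans_le hr.1, hr.2.trans_lt hy.2⟩
  set F := (eVariationOn f (Ioo c d)).toReal with hF
  set W := variationOnFromTo u (Ioo c d) s t with hW
  have hFW : F < W := by
    rw [hW, variationOnFromTo.eq_of_le _ _ hst.le]
    exact (ENNReal.toReal_lt_toReal hfV (huJ.mono inter_subset_left)).2 hlt
  have hF0 : 0 ≤ F := ENNReal.toReal_nonneg
  have huL := huJ.locallyBoundedVariationOn
  have hfL := hfV.locallyBoundedVariationOn
  set ε := (W - F) / (2 * W) with hε
  have hW0 : 0 < W := hF0.trans_lt hFW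
  have hε0 : 0 < ε := div_pos (by linarith) (by linarith)
  have hε1 : (1 - ε) * W = (W + F) / 2 := by rw [hε]; field_simp; ring
  have hε2 : 0 < 1 - ε := by
    by_contra h
    push Not at h
    nlinarith
  set Vu := variationOnFromTo u (Ioo c d) s with hVu
  set Vf := variationOnFromTo f (Ioo c d) s with hVf
  have mVu : MonotoneOn Vu (Ioo c d) := variationOnFromTo.monotoneOn huL hs
  have mVf : MonotoneOn Vf (Ioo c d) := variationOnFromTo.monotoneOn hfL hs
  have dVu : ∀ x ∈ Ioo c d, ∀ y ∈ Ioo c d, x ≤ y → Vu y - Vu x = (eVariationOn u (Icc x y)).toReal := by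
    intro x hx y hy hxy
    rw [hVu, variationOnFromTo.sub_right huL hs hy hx, variationOnFromTo.eq_of_le _ _ hxy,
      hinter x hx y hy]
  have dVf : ∀ x ∈ Ioo c d, ∀ y ∈ Ioo c d, x ≤ y → Vf y - Vf x = (eVariationOn f (Icc x y)).toReal := by
    intro x hx y hy hxy
    rw [hVf, variationOnFromTo.sub_right hfL hs hy hx, variationOnFromTo.eq_of_le _ _ hxy,
      hinter x hx y hy]
  have hsubu : ∀ x ∈ Ioo c d, ∀ y ∈ Ioo c d, uIcc x y ⊆ Ioo c d := fun x hx y hy =>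
    ordConnected_Ioo.uIcc_subset hx hy
  have hal : ∀ p ∈ Ioo c d, ∀ h, 0 < h → p - h ∈ Ioo c d → p + h ∈ Ioo c d →
      (1 - 2 * ∫ y in (p - h)..(p + h), ‖k y‖) * (Vu (p + h) - Vu (p - h))
        ≤ inner ℝ (∫ y in Iic p, k y) (u (p + h) - u (p - h)) := by
    intro p hp h h0 m1 m2
    rw [dVu _ m1 _ m2 (by linarith)]
    refine rof_align hk (by linarith) (by linarith) ?_ (hC _ (hJ m1) _ (hJ m2) (by linarith))
    rw [← hinter _ m1 _ m2]
    exact huJ.mono inter_subset_left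
  have hsmall : ∀ p ∈ Ioo c d, ∀ e > 0, ∃ δ > 0, c < p - δ ∧ p + δ < d ∧
      ∀ h, 0 < h → h < δ → 2 * ∫ y in (p - h)..(p + h), ‖k y‖ ≤ e := by
    intro p hp e he
    have hcont : Continuous (fun h : ℝ => 2 * ∫ y in (p - h)..(p + h), ‖k y‖) := by
      have hc := intervalIntegral.continuous_primitive (μ := volume) (f := fun y => ‖k y‖)
        (fun _ _ => hk.norm.intervalIntegrable) p
      have : (fun h : ℝ => 2 * ∫ y in (p - h)..(p + h), ‖k y‖) =
        fun h : ℝ => 2 * ((∫ y in p..(p + h), ‖k y‖) - ∫ y in p..(p - h), ‖k y‖) := by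
        funext h
        rw [intervalIntegral.integral_interval_sub_left hk.norm.intervalIntegrable
          hk.norm.intervalIntegrable]
      rw [this]
      exact continuous_const.mul ((hc.comp (continuous_const.add continuous_id)).sub
        (hc.comp (continuous_const.sub continuous_id)))
    have h0 := (hcont.tendsto 0).eventually_lt_const (u := e) (by simpa using he)
    obtain ⟨δ, hδ, hb⟩ := Metric.eventually_nhds_iff.1 h0
    have hm : 0 < min (p - c) (d - p) := lt_min (by linarith [hp.1]) (by linarith [hp.2])
    have q1 := min_le_left (p - c) (d - p)
    have q2 := min_le_right (p - c) (d - p)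
    refine ⟨min δ (min (p - c) (d - p) / 2), lt_min hδ (by linarith), ?_, ?_, ?_⟩
    · have := min_le_right δ (min (p - c) (d - p) / 2); linarith
    · have := min_le_right δ (min (p - c) (d - p) / 2); linarith
    · intro h hh hhδ
      refine (hb ?_).le
      rw [Real.dist_eq, sub_zero, abs_of_pos hh]
      exact hhδ.trans_le (min_le_left _ _)
  have iVu : ∀ x ∈ Ioo c d, ∀ y ∈ Ioo c d, IntervalIntegrable Vu volume x y := fun x hx y hy =>
    (mVu.mono (hsubu x hx y hy)).intervalIntegrable
  have iVf : ∀ x ∈ Ioo c d, ∀ y ∈ Ioo c d, IntervalIntegrable Vf volume x y := fun x hx y hy =>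
    (mVf.mono (hsubu x hx y hy)).intervalIntegrable
  have iG : ∀ x ∈ Ioo c d, ∀ y ∈ Ioo c d,
      IntervalIntegrable (fun x => (1 - ε) * Vu x - Vf x) volume x y := fun x hx y hy =>
    ((iVu x hx y hy).const_mul _).sub (iVf x hx y hy)
  obtain ⟨s', hs', t', ht', hss, htt, hG⟩ :=
    exists_le_of_mean (G := fun x => (1 - ε) * Vu x - Vf x) iG (by
      intro p hp
      set q := ∫ y in Iic p, k y with hq
      by_cases hq1 : ‖q‖ < 1
      · obtain ⟨δ, hδ, hc1, hd1, hsm⟩ := hsmall p hp ((1 - ‖q‖) / 2) (by linarith)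
        refine ⟨δ, hδ, fun h h0 hh => ?_⟩
        have : 0 ≤ ∫ y in (0:ℝ)..h, -(((1 - ε) * Vu (p + y) - Vf (p + y)) - ((1 - ε) * Vu (p - y) - Vf (p - y))) := by
          refine intervalIntegral.integral_nonneg h0.le fun y hy => ?_
          rcases eq_or_lt_of_le hy.1 with h00 | hy0
          · rw [← h00]; simp
          have hyd : y < δ := hy.2.trans_lt hh
          have m1 : p - y ∈ Ioo c d := ⟨by linarith, by linarith [hp.2]⟩
          have m2 : p + y ∈ Ioo c d := ⟨by linarith [hp.1], by linarith⟩
          have a1 := hal p hp y hy0 m1 m2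
          have a2 := hsm y hy0 hyd
          have a3 := mVu m1 m2 (by linarith)
          have a4 := mVf m1 m2 (by linarith)
          have a5 : ‖u (p + y) - u (p - y)‖ ≤ Vu (p + y) - Vu (p - y) := by
            rw [dVu _ m1 _ m2 (by linarith), ← dist_eq_norm]
            refine BoundedVariationOn.dist_le ?_ ⟨by linarith, le_rfl⟩ ⟨le_rfl, by linarith⟩
            rw [← hinter _ m1 _ m2]
            exact huJ.mono inter_subset_left
          have a6 := real_inner_le_norm q (u (p + y) - u (p - y))
          have a7 : ‖q‖ * ‖u (p + y) - u (p - y)‖ ≤ ‖q‖ * (Vu (p + y) - Vu (p - y)) :=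
            mul_le_mul_of_nonneg_left a5 (norm_nonneg _)
          have a8 : (1 - (1 - ‖q‖) / 2) * (Vu (p + y) - Vu (p - y)) ≤ ‖q‖ * (Vu (p + y) - Vu (p - y)) := by
            refine le_trans (mul_le_mul_of_nonneg_right ?_ (by linarith)) (a1.trans (a6.trans a7))
            linarith
          have a9 : Vu (p + y) - Vu (p - y) = 0 := by
            refine le_antisymm ?_ (by linarith)
            by_contra hne
            push Not at hne
            nlinarith
          have a10 : (1 - ε) * (Vu (p + y) - Vu (p - y)) = 0 := by rw [a9, mul_zero]
          linarith
        rw [intervalIntegral.integral_neg] at this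
        linarith
      · obtain ⟨δ, hδ, hc1, hd1, hsm⟩ := hsmall p hp ε hε0
        have hqe : ‖q‖ = 1 := le_antisymm (hz1 p) (not_lt.1 hq1)
        refine ⟨δ, hδ, fun h h0 hh => ?_⟩
        have n1 : p + h ∈ Ioo c d := ⟨by linarith [hp.1], by linarith⟩
        have n2 : p - h ∈ Ioo c d := ⟨by linarith, by linarith [hp.2]⟩
        have i1 : IntervalIntegrable (fun y => (1 - ε) * Vu (p + y) - Vf (p + y)) volume 0 h := by
          have := (iG _ hp _ n1).comp_add_left p
          simpa using this
        have i2 : IntervalIntegrable (fun y => (1 - ε) * Vu (p - y) - Vf (p - y)) volume 0 h := by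
          have := (iG _ hp _ n2).comp_sub_left p
          simpa using this
        have hqk : Integrable (fun y => inner ℝ q (k y)) := hk.const_inner q
        have j1 : IntervalIntegrable (fun y => inner ℝ q (k (p + y))) volume 0 h :=
          (hqk.comp_add_left p).intervalIntegrable
        have j2 : IntervalIntegrable (fun y => inner ℝ q (k (p - y))) volume 0 h :=
          (hqk.comp_sub_left p).intervalIntegrable
        have hle : ∫ y in (0:ℝ)..h, (((1 - ε) * Vu (p + y) - Vf (p + y)) - ((1 - ε) * Vu (p - y) - Vf (p - y)))
            ≤ ∫ y in (0:ℝ)..h, lam * (inner ℝ q (k (p + y)) - inner ℝ q (k (p - y))) := by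
          refine intervalIntegral.integral_mono_on h0.le (i1.sub i2) ((j1.sub j2).const_mul lam) fun y hy => ?_
          rcases eq_or_lt_of_le hy.1 with h00 | hy0
          · rw [← h00]; simp
          have hyd : y < δ := hy.2.trans_lt hh
          have m1 : p - y ∈ Ioo c d := ⟨by linarith, by linarith [hp.2]⟩
          have m2 : p + y ∈ Ioo c d := ⟨by linarith [hp.1], by linarith⟩
          have a1 := hal p hp y hy0 m1 m2
          have a2 := hsm y hy0 hyd
          have a3 := mVu m1 m2 (by linarith)
          have a5 : ‖f (p + y) - f (p - y)‖ ≤ Vf (p + y) - Vf (p - y) := by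
            rw [dVf _ m1 _ m2 (by linarith), ← dist_eq_norm]
            refine BoundedVariationOn.dist_le ?_ ⟨by linarith, le_rfl⟩ ⟨le_rfl, by linarith⟩
            rw [← hinter _ m1 _ m2]
            exact hfV.mono inter_subset_left
          have a6 := real_inner_le_norm q (f (p + y) - f (p - y))
          rw [hqe, one_mul] at a6
          have a8 : (1 - ε) * (Vu (p + y) - Vu (p - y)) ≤ inner ℝ q (u (p + y) - u (p - y)) :=
            le_trans (mul_le_mul_of_nonneg_right (by linarith) (by linarith)) a1
          have a9 : lam * (inner ℝ q (k (p + y)) - inner ℝ q (k (p - y)))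
              = inner ℝ q (u (p + y) - u (p - y)) - inner ℝ q (f (p + y) - f (p - y)) := by
            rw [← inner_sub_right, ← real_inner_smul_right, ← inner_sub_right, smul_sub,
              ← hkuf _ (hJ m1), ← hkuf _ (hJ m2)]
            congr 1
            abel
          rw [a9]
          linarith
        refine hle.trans ?_
        rw [intervalIntegral.integral_const_mul, intervalIntegral.integral_sub j1 j2,
          intervalIntegral.integral_comp_add_left (fun y => inner ℝ q (k y)),
          intervalIntegral.integral_comp_sub_left (fun y => inner ℝ q (k y)), add_zero, sub_zero,
          ← intervalIntegral.integral_Iic_sub_Iic hqk.integrableOn hqk.integrableOn,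
          ← intervalIntegral.integral_Iic_sub_Iic hqk.integrableOn hqk.integrableOn,
          integral_inner hk.integrableOn, integral_inner hk.integrableOn,
          integral_inner hk.integrableOn, ← hq, real_inner_self_eq_norm_sq, hqe]
        have r1 := real_inner_le_norm q (∫ y in Iic (p + h), k y)
        have r2 := real_inner_le_norm q (∫ y in Iic (p - h), k y)
        rw [hqe, one_mul] at r1 r2
        have r3 := hz1 (p + h)
        have r4 := hz1 (p - h)
        exact mul_nonpos_of_nonneg_of_nonpos hlam.le (by linarith)) hs ht hst.le
  have f1 : Vf t' - Vf s' ≤ F := by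
    rw [dVf _ hs' _ ht' (by linarith), ← hinter _ hs' _ ht']
    exact ENNReal.toReal_mono hfV (eVariationOn.mono f inter_subset_left)
  have f2 : W ≤ Vu t' - Vu s' := by
    have g1 := mVu ht ht' htt
    have g2 := mVu hs' hs hss
    have g3 : Vu s = 0 := variationOnFromTo.self _ _ _
    have g4 : Vu t = W := rfl
    linarith
  have f3 := mul_le_mul_of_nonneg_left f2 hε2.le
  linarith
end
end

section
/- Let u be a minimizer of the energy E, and let U ⊆ I be an open interval on which f has bounded variation (eVariationOn f U < ∞). Then there is a function ū equal to u almost everywhere on I such that for every closed interval [c,d] ⊆ U one has eVariationOn ū (Set.Icc c d) ≤ eVariationOn f (Set.Icc c d). -/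
open MeasureTheory Set Filter
open scoped ENNReal

noncomputable section

theorem aux_evar_le {α E : Type*} [LinearOrder α] [PseudoMetricSpace E] (g : α → E) (S : α → ℝ)
    (s : Set α) (M : ℝ)
    (h1 : ∀ x ∈ s, ∀ y ∈ s, x ≤ y → dist (g x) (g y) ≤ S y - S x)
    (h2 : ∀ x ∈ s, ∀ y ∈ s, x ≤ y → S y - S x ≤ M) :
    eVariationOn g s ≤ ENNReal.ofReal M := by
  unfold eVariationOn
  refine iSup_le ?_
  rintro ⟨n, u, hu, hus⟩
  dsimp only
  have hstep : ∀ i, edist (g (u (i+1))) (g (u i)) ≤ ENNReal.ofReal (S (u (i+1)) - S (u i)) := by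
    intro i
    rw [edist_comm, edist_dist]
    exact ENNReal.ofReal_le_ofReal (h1 _ (hus i) _ (hus (i+1)) (hu (Nat.le_succ i)))
  calc ∑ i ∈ Finset.range n, edist (g (u (i+1))) (g (u i))
      ≤ ∑ i ∈ Finset.range n, ENNReal.ofReal (S (u (i+1)) - S (u i)) :=
        Finset.sum_le_sum fun i _ => hstep i
    _ = ENNReal.ofReal (∑ i ∈ Finset.range n, (S (u (i+1)) - S (u i))) := by
        rw [ENNReal.ofReal_sum_of_nonneg]
        intro i _
        exact dist_nonneg.trans (h1 _ (hus i) _ (hus (i+1)) (hu (Nat.le_succ i)))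
    _ = ENNReal.ofReal (S (u n) - S (u 0)) := by
        rw [Finset.sum_range_sub (fun i => S (u i))]
    _ ≤ _ := ENNReal.ofReal_le_ofReal (h2 _ (hus 0) _ (hus n) (hu (Nat.zero_le n)))

def auxD {E : Type*} [NormedAddCommGroup E] (f : ℕ → E) (κ : ℝ) (N : ℕ) (v : ℕ → E) : ℝ :=
  ∑ i ∈ Finset.range N, ‖v (i+1) - v i‖ + κ * ∑ i ∈ Finset.range (N+1), ‖v i - f i‖^2

theorem auxD_exists {E : Type*} [NormedAddCommGroup E] [ProperSpace E] (f : ℕ → E) (κ : ℝ)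
    (hκ : 0 < κ) (N : ℕ) : ∃ v, ∀ w, auxD f κ N v ≤ auxD f κ N w := by
  set M := auxD f κ N f with hM
  have hMn : 0 ≤ M := by rw [hM]; unfold auxD; positivity
  set R := Real.sqrt (M / κ) with hR
  have hK : IsCompact (Set.pi univ fun i => Metric.closedBall (f i) R) :=
    isCompact_univ_pi fun i => isCompact_closedBall _ _
  have hf : f ∈ Set.pi univ fun i => Metric.closedBall (f i) R := by
    intro i _; exact Metric.mem_closedBall_self (Real.sqrt_nonneg _)
  have hc : Continuous (auxD f κ N) := by
    unfold auxD
    fun_prop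
  obtain ⟨v, hv, hmin⟩ := hK.exists_isMinOn ⟨f, hf⟩ hc.continuousOn
  refine ⟨v, fun w => ?_⟩
  by_cases hw : auxD f κ N w ≤ M
  · let w' : ℕ → E := fun i => if i < N + 1 then w i else f i
    have hw' : auxD f κ N w' = auxD f κ N w := by
      unfold auxD
      congr 1
      · refine Finset.sum_congr rfl fun i hi => ?_
        rw [Finset.mem_range] at hi
        simp only [w', if_pos (show i < N + 1 by omega), if_pos (show i + 1 < N + 1 by omega)]
      · congr 1
        refine Finset.sum_congr rfl fun i hi => ?_
        rw [Finset.mem_range] at hi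
        simp only [w', if_pos hi]
    rw [← hw']
    refine hmin ?_
    intro i _
    by_cases hi : i < N + 1
    · simp only [w', if_pos hi, Metric.mem_closedBall, dist_eq_norm]
      refine Real.le_sqrt_of_sq_le ?_
      rw [le_div_iff₀ hκ]
      have h1 : ‖w i - f i‖^2 ≤ ∑ i ∈ Finset.range (N+1), ‖w i - f i‖^2 :=
        Finset.single_le_sum (f := fun i => ‖w i - f i‖^2) (fun _ _ => by positivity)
          (Finset.mem_range.2 hi)
      have h2 : 0 ≤ ∑ i ∈ Finset.range N, ‖w (i+1) - w i‖ := by positivity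
      unfold auxD at hw
      nlinarith
    · simp only [w', if_neg hi]
      exact hf i trivial
  · exact (hmin hf).trans (not_le.1 hw).le

theorem auxD_bound {E : Type*} [NormedAddCommGroup E] [InnerProductSpace ℝ E] (f : ℕ → E) (κ : ℝ)
    (hκ : 0 < κ) (N : ℕ) (v : ℕ → E) (hv : ∀ w, auxD f κ N v ≤ auxD f κ N w) (i : ℕ)
    (hi : i < N) : ‖v (i+1) - v i‖ ≤ ‖f (i+1) - f i‖ := by
  set J := v (i+1) - v i with hJ
  have key : ∀ t : ℝ, 0 < t → t < 1/2 →
      0 ≤ t * (t * ‖J‖^2 - ‖J‖^2 + inner ℝ J (f (i+1) - f i)) := by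
    intro t ht0 ht1
    let w : ℕ → E := fun j => v j + (if j = i then t • J else 0) - (if j = i+1 then t • J else 0)
    have hw := hv w
    have hJw : ∀ j, ‖w (j+1) - w j‖ ≤ ‖v (j+1) - v j‖ + t * ‖J‖ *
        ((if j + 1 = i then 1 else 0) + (if j = i+1 then 1 else 0) - (if j = i then 2 else 0)) := by
      intro j
      rcases lt_trichotomy j i with h | h | h
      · by_cases h' : j + 1 = i
        · have e : w (j+1) - w j = (v (j+1) - v j) + t • J := by
            simp only [w, if_pos h', if_neg (show ¬ j + 1 = i + 1 by omega),
              if_neg (show ¬ j = i by omega), if_neg (show ¬ j = i + 1 by omega)]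
            abel
          rw [e, if_pos h', if_neg (show ¬ j = i + 1 by omega), if_neg (show ¬ j = i by omega)]
          refine (norm_add_le _ _).trans ?_
          rw [norm_smul, Real.norm_of_nonneg ht0.le]; linarith
        · have e : w (j+1) - w j = (v (j+1) - v j) := by
            simp only [w, if_neg h', if_neg (show ¬ j + 1 = i + 1 by omega),
              if_neg (show ¬ j = i by omega), if_neg (show ¬ j = i + 1 by omega)]
            abel
          rw [e, if_neg h', if_neg (show ¬ j = i + 1 by omega), if_neg (show ¬ j = i by omega)]
          simp
      · subst h
        have e : w (j+1) - w j = (1 - 2 * t) • J := by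
          simp only [w, if_neg (show ¬ j + 1 = j by omega), if_pos, 
            if_neg (show ¬ j = j + 1 by omega)]
          rw [hJ]; module
        rw [e, if_neg (show ¬ j + 1 = j by omega), if_neg (show ¬ j = j + 1 by omega), if_pos rfl,
          norm_smul, Real.norm_of_nonneg (by linarith), ← hJ]
        linarith
      · by_cases h' : j = i + 1
        · have e : w (j+1) - w j = (v (j+1) - v j) + t • J := by
            simp only [w, if_pos h', if_neg (show ¬ j + 1 = i + 1 by omega),
              if_neg (show ¬ j = i by omega), if_neg (show ¬ j + 1 = i by omega)]
            abel
          rw [e, if_pos h', if_neg (show ¬ j + 1 = i by omega), if_neg (show ¬ j = i by omega)]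
          refine (norm_add_le _ _).trans ?_
          rw [norm_smul, Real.norm_of_nonneg ht0.le]; linarith
        · have e : w (j+1) - w j = (v (j+1) - v j) := by
            simp only [w, if_neg h', if_neg (show ¬ j + 1 = i + 1 by omega),
              if_neg (show ¬ j = i by omega), if_neg (show ¬ j + 1 = i by omega)]
            abel
          rw [e, if_neg h', if_neg (show ¬ j + 1 = i by omega), if_neg (show ¬ j = i by omega)]
          simp
    have hsum : ∑ j ∈ Finset.range N, ‖w (j+1) - w j‖ ≤ ∑ j ∈ Finset.range N, ‖v (j+1) - v j‖ := by
      refine (Finset.sum_le_sum fun j _ => hJw j).trans ?_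
      rw [Finset.sum_add_distrib, ← Finset.mul_sum, Finset.sum_sub_distrib, Finset.sum_add_distrib]
      have a1 : ∑ j ∈ Finset.range N, (if j + 1 = i then (1:ℝ) else 0) ≤ 1 := by
        rcases Nat.eq_zero_or_pos i with h0 | h0
        · subst h0; simp
        · have : ∀ j, (j + 1 = i) = (j = i - 1) := fun j => by
            apply propext; omega
          simp only [this]
          rw [Finset.sum_ite_eq']
          split_ifs <;> norm_num
      have a2 : ∑ j ∈ Finset.range N, (if j = i + 1 then (1:ℝ) else 0) ≤ 1 := by
        rw [Finset.sum_ite_eq']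
        split_ifs <;> norm_num
      have a3 : ∑ j ∈ Finset.range N, (if j = i then (2:ℝ) else 0) = 2 := by
        rw [Finset.sum_ite_eq', if_pos (Finset.mem_range.2 hi)]
      have : 0 ≤ t * ‖J‖ := by positivity
      rw [a3]
      nlinarith
    have hfid : ∀ j, ‖w j - f j‖^2 = ‖v j - f j‖^2 + 
        ((if j = i then 2 * t * inner ℝ (v i - f i) J + t^2*‖J‖^2 else 0) + 
        (if j = i + 1 then - 2 * t * inner ℝ (v (i+1) - f (i+1)) J + t^2*‖J‖^2 else 0)) := by
      intro j
      by_cases h : j = i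
      · subst h
        have e : w j - f j = (v j - f j) + t • J := by
          simp only [w, if_pos, if_neg (show ¬ j = j + 1 by omega)]
          abel
        rw [e, if_pos rfl, if_neg (show ¬ j = j + 1 by omega), norm_add_sq_real, inner_smul_right,
          norm_smul, mul_pow, Real.norm_eq_abs, sq_abs]
        ring
      · by_cases h' : j = i + 1
        · have e : w j - f j = (v j - f j) - t • J := by
            simp only [w, if_neg h, if_pos h']
            abel
          rw [e, if_neg h, if_pos h', norm_sub_sq_real, inner_smul_right,
            norm_smul, mul_pow, Real.norm_eq_abs, sq_abs, h']
          ring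
        · have e : w j = v j := by
            simp only [w, if_neg h, if_neg h']
            abel
          rw [e, if_neg h, if_neg h']
          ring
    have hfs : ∑ j ∈ Finset.range (N+1), ‖w j - f j‖^2 = ∑ j ∈ Finset.range (N+1), ‖v j - f j‖^2 +
        ((2 * t * inner ℝ (v i - f i) J + t^2*‖J‖^2) + 
        (- 2 * t * inner ℝ (v (i+1) - f (i+1)) J + t^2*‖J‖^2)) := by
      rw [Finset.sum_congr rfl fun j _ => hfid j, Finset.sum_add_distrib, Finset.sum_add_distrib,
        Finset.sum_ite_eq', Finset.sum_ite_eq', if_pos (Finset.mem_range.2 (by omega)),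
        if_pos (Finset.mem_range.2 (by omega))]
    unfold auxD at hw
    rw [hfs] at hw
    have hin : inner ℝ (v i - f i) J - inner ℝ (v (i+1) - f (i+1)) J = 
        inner ℝ J (f (i+1) - f i) - ‖J‖^2 := by
      rw [← inner_sub_left, ← real_inner_self_eq_norm_sq J, ← inner_sub_right, real_inner_comm]
      congr 1
      rw [hJ]; abel
    have h3 : 0 ≤ κ * (2 * (t * (t * ‖J‖^2 - ‖J‖^2 + inner ℝ J (f (i+1) - f i)))) := by
      have : t * (t * ‖J‖^2 - ‖J‖^2 + inner ℝ J (f (i+1) - f i)) = 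
        t^2 * ‖J‖^2 + t * (inner ℝ (v i - f i) J - inner ℝ (v (i+1) - f (i+1)) J) := by
        rw [hin]; ring
      rw [this]
      linarith
    have := nonneg_of_mul_nonneg_right h3 hκ
    linarith
  have key2 : ‖J‖^2 ≤ inner ℝ J (f (i+1) - f i) := by
    by_contra hcon
    push Not at hcon
    set δ := ‖J‖^2 - inner ℝ J (f (i+1) - f i) with hδ
    have hδ0 : 0 < δ := by rw [hδ]; linarith
    have hq : 0 ≤ ‖J‖^2 := by positivity
    have hk := key (min (1/4) (δ / (2 * (‖J‖^2 + 1)))) (by positivity)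
      ((min_le_left _ _).trans_lt (by norm_num))
    have ht0 : 0 < (min (1/4) (δ / (2 * (‖J‖^2 + 1)))) := by positivity
    have h4 := nonneg_of_mul_nonneg_right hk ht0
    have h5 : (min (1/4) (δ / (2 * (‖J‖^2 + 1)))) * ‖J‖^2 ≤ δ / 2 := by
      calc _ ≤ (δ / (2 * (‖J‖^2 + 1))) * ‖J‖^2 := by gcongr; exact min_le_right _ _
        _ ≤ (δ / (2 * (‖J‖^2 + 1))) * (‖J‖^2 + 1) := by gcongr; linarith
        _ = δ / 2 := by field_simp
    linarith
  have := real_inner_le_norm J (f (i+1) - f i)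
  by_contra hcon
  push Not at hcon
  have : 0 < ‖J‖ := (norm_nonneg _).trans_lt hcon
  nlinarith

theorem aux_onepoint {E : Type*} [NormedAddCommGroup E] [NormedSpace ℝ E] [ProperSpace E]
    (V : ℝ → ℝ) (hV : Monotone V) (G : Set ℝ) (u : ℝ → E)
    (hu : ∀ x ∈ G, ∀ y ∈ G, x ≤ y → dist (u x) (u y) ≤ V y - V x) (x : ℝ)
    (hl : ∃ g ∈ G, g < x) (hr : ∃ g ∈ G, x < g) :
    ∃ e : E, (∀ g ∈ G, g < x → dist (u g) e ≤ V x - V g) ∧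
      (∀ g ∈ G, x < g → dist e (u g) ≤ V g - V x) := by
  let ι := {g : ℝ // g ∈ G ∧ g < x} × {g : ℝ // g ∈ G ∧ x < g}
  have : Nonempty ι := by
    obtain ⟨g, h1, h2⟩ := hl
    obtain ⟨g', h1', h2'⟩ := hr
    exact ⟨⟨⟨g, h1, h2⟩, ⟨g', h1', h2'⟩⟩⟩
  let K : ι → Set E := fun p => Metric.closedBall (u p.1.1) (V x - V p.1.1) ∩
    Metric.closedBall (u p.2.1) (V p.2.1 - V x)
  have hmono : ∀ p q : ι, p.1.1 ≤ q.1.1 → q.2.1 ≤ p.2.1 → K q ⊆ K p := by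
    rintro p q h1 h2 e ⟨he1, he2⟩
    rw [Metric.mem_closedBall] at he1 he2
    constructor
    · rw [Metric.mem_closedBall]
      have := hu _ p.1.2.1 _ q.1.2.1 h1
      have t := dist_triangle e (u q.1.1) (u p.1.1)
      rw [dist_comm (u q.1.1)] at t
      linarith
    · rw [Metric.mem_closedBall]
      have := hu _ q.2.2.1 _ p.2.2.1 h2
      have t := dist_triangle e (u q.2.1) (u p.2.1)
      linarith
  have hne : (⋂ p, K p).Nonempty := by
    apply IsCompact.nonempty_iInter_of_directed_nonempty_isCompact_isClosed
    · intro p q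
      refine ⟨(if p.1.1 ≤ q.1.1 then q.1 else p.1, if p.2.1 ≤ q.2.1 then p.2 else q.2), ?_, ?_⟩
      · apply hmono
        · dsimp only; split_ifs with h
          · exact h
          · exact le_rfl
        · dsimp only; split_ifs with h
          · exact le_rfl
          · exact (not_le.1 h).le
      · apply hmono
        · dsimp only; split_ifs with h
          · exact le_rfl
          · exact (not_le.1 h).le
        · dsimp only; split_ifs with h
          · exact h
          · exact le_rfl
    · intro p
      have h1 := hV p.1.2.2.le
      have h2 := hV p.2.2.2.le
      obtain ⟨e, he1, he2⟩ := exists_dist_le_le (x := u p.1.1) (z := u p.2.1) (sub_nonneg.2 h1) (sub_nonneg.2 h2)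
        (by have := hu _ p.1.2.1 _ p.2.2.1 (p.1.2.2.trans p.2.2.2).le; linarith)
      exact ⟨e, by rw [Metric.mem_closedBall, dist_comm]; exact he1, he2⟩
    · intro p; exact (isCompact_closedBall _ _).inter_right Metric.isClosed_closedBall
    · intro p; exact Metric.isClosed_closedBall.inter Metric.isClosed_closedBall
  obtain ⟨e, he⟩ := hne
  rw [mem_iInter] at he
  refine ⟨e, fun g hg hgx => ?_, fun g hg hgx => ?_⟩
  · obtain ⟨g', h1', h2'⟩ := hr
    have := (he (⟨g, hg, hgx⟩, ⟨g', h1', h2'⟩)).1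
    rw [Metric.mem_closedBall, dist_comm] at this
    exact this
  · obtain ⟨g', h1', h2'⟩ := hl
    exact (he (⟨g', h1', h2'⟩, ⟨g, hg, hgx⟩)).2

def auxIdx (a h x : ℝ) : ℕ := ⌊(x - a) / h⌋₊

theorem auxIdx_eq {a h x : ℝ} (hh : 0 < h) {i : ℕ} (h1 : a + i * h ≤ x) (h2 : x < a + (i+1) * h) :
    auxIdx a h x = i := by
  unfold auxIdx
  rw [Nat.floor_eq_iff (div_nonneg (by have : 0 ≤ (i:ℝ) * h := by positivity
                                       linarith) hh.le)]
  rw [le_div_iff₀ hh, div_lt_iff₀ hh]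
  constructor <;> linarith

theorem auxIdx_mono {a h : ℝ} (hh : 0 < h) : Monotone (auxIdx a h) := by
  intro x y hxy
  unfold auxIdx
  gcongr

theorem auxIdx_le {a h x : ℝ} (hh : 0 < h) (hx : a ≤ x) : a + auxIdx a h x * h ≤ x := by
  have := Nat.floor_le (div_nonneg (sub_nonneg.2 hx) hh.le)
  rw [le_div_iff₀ hh] at this
  unfold auxIdx
  linarith

theorem auxIdx_lt {a h x : ℝ} (hh : 0 < h) : x < a + (auxIdx a h x + 1) * h := by
  have := Nat.lt_floor_add_one ((x - a) / h)
  rw [div_lt_iff₀ hh] at this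
  unfold auxIdx
  linarith

theorem auxIdx_le_N {a b h x : ℝ} (hh : 0 < h) {N : ℕ} (hN : (N + 1 : ℝ) * h = b - a)
    (hx : x ∈ Ioo a b) : auxIdx a h x ≤ N := by
  have h1 := auxIdx_le hh hx.1.le
  by_contra hcon
  push Not at hcon
  have h2 : (N:ℝ) + 1 ≤ auxIdx a h x := by exact_mod_cast hcon
  have h3 : (N + 1 : ℝ) * h ≤ auxIdx a h x * h := by gcongr
  linarith [hx.2]

theorem auxIdx_meas (a h : ℝ) : Measurable (auxIdx a h) := by
  unfold auxIdx
  exact Nat.measurable_floor.comp (by fun_prop)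

theorem aux_step_evar {E : Type*} [NormedAddCommGroup E] {a b h : ℝ} (hh : 0 < h) {N : ℕ}
    (hN : (N + 1 : ℝ) * h = b - a) (v : ℕ → E) :
    eVariationOn (fun x => v (auxIdx a h x)) (Ioo a b) ≤
      ENNReal.ofReal (∑ i ∈ Finset.range N, ‖v (i+1) - v i‖) := by
  apply aux_evar_le _ (fun x => ∑ i ∈ Finset.range (auxIdx a h x), ‖v (i+1) - v i‖)
  · intro x hx y hy hxy
    have := auxIdx_mono (a := a) hh hxy
    rw [← Finset.sum_Ico_eq_sub _ this]
    refine (dist_le_Ico_sum_dist v this).trans (le_of_eq ?_)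
    refine Finset.sum_congr rfl fun i _ => ?_
    rw [dist_comm, dist_eq_norm]
  · intro x hx y hy hxy
    have h1 : ∑ i ∈ Finset.range (auxIdx a h y), ‖v (i+1) - v i‖ ≤
        ∑ i ∈ Finset.range N, ‖v (i+1) - v i‖ :=
      Finset.sum_le_sum_of_subset_of_nonneg
        (Finset.range_mono (auxIdx_le_N hh hN hy)) (fun _ _ _ => norm_nonneg _)
    have h2 : 0 ≤ ∑ i ∈ Finset.range (auxIdx a h x), ‖v (i+1) - v i‖ := by positivity
    linarith

theorem aux_cell {E : Type*} [NormedAddCommGroup E] [InnerProductSpace ℝ E] [CompleteSpace E]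
    {p q h : ℝ} (hh : 0 < h) (hq : q - p = h) (f : ℝ → E) (e : E)
    (hf : IntervalIntegrable f volume p q)
    (hf2 : IntervalIntegrable (fun x => ‖f x‖^2) volume p q) :
    IntervalIntegrable (fun x => ‖e - f x‖^2) volume p q ∧
    ∫ x in p..q, ‖e - f x‖^2 = h * ‖e - h⁻¹ • ∫ x in p..q, f x‖^2 +
      ((∫ x in p..q, ‖f x‖^2) - h⁻¹ * ‖∫ x in p..q, f x‖^2) := by
  have e1 : (fun x => ‖e - f x‖^2) = fun x => ‖e‖^2 - 2 * inner ℝ e (f x) + ‖f x‖^2 := by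
    ext x; rw [norm_sub_sq_real]
  have i1 : IntervalIntegrable (fun x => (inner ℝ e (f x) : ℝ)) volume p q :=
    ⟨((innerSL ℝ e).integrable_comp hf.1), ((innerSL ℝ e).integrable_comp hf.2)⟩
  have i2 : ∫ x in p..q, (inner ℝ e (f x) : ℝ) = inner ℝ e (∫ x in p..q, f x) :=
    (innerSL ℝ e).intervalIntegral_comp_comm hf
  have i3 : IntervalIntegrable (fun x => ‖e‖^2 - 2 * (inner ℝ e (f x) : ℝ)) volume p q :=
    intervalIntegrable_const.sub (i1.const_mul 2)
  rw [e1]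
  refine ⟨i3.add hf2, ?_⟩
  rw [intervalIntegral.integral_add i3 hf2,
    intervalIntegral.integral_sub intervalIntegrable_const (i1.const_mul 2),
    intervalIntegral.integral_const_mul, i2, intervalIntegral.integral_const, hq, norm_sub_sq_real,
    inner_smul_right, norm_smul, mul_pow, Real.norm_eq_abs, sq_abs, smul_eq_mul]
  field_simp
  ring

/-- cell averages -/
def auxAvg {E : Type*} [NormedAddCommGroup E] [NormedSpace ℝ E] (a h : ℝ) (f : ℝ → E) (i : ℕ) : E :=
  h⁻¹ • ∫ x in (a + i * h)..(a + (i + 1 : ℕ) * h), f x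

theorem aux_fid {E : Type*} [NormedAddCommGroup E] [InnerProductSpace ℝ E] [CompleteSpace E]
    {a b h : ℝ} (hab : a < b) (hh : 0 < h) {N : ℕ} (hN : (N + 1 : ℝ) * h = b - a) (f : ℝ → E)
    (hf : IntegrableOn f (Ioo a b)) (hf2 : IntegrableOn (fun x => ‖f x‖^2) (Ioo a b)) :
    ∃ C : ℝ, ∀ v : ℕ → E, ∫ x in Ioo a b, ‖v (auxIdx a h x) - f x‖^2 =
      h * ∑ i ∈ Finset.range (N+1), ‖v i - auxAvg a h f i‖^2 + C := by
  let p : ℕ → ℝ := fun i => a + i * h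
  have hp : ∀ i, p (i+1) - p i = h := fun i => by simp only [p]; push_cast; ring
  have hpl : ∀ i, p i ≤ p (i+1) := fun i => by linarith [hp i]
  have hp0 : p 0 = a := by simp [p]
  have hpN : p (N+1) = b := by simp only [p]; push_cast; linarith
  have hpm : Monotone p := monotone_nat_of_le_succ hpl
  have sub : ∀ i < N+1, uIcc (p i) (p (i+1)) ⊆ uIcc a b := by
    intro i hi
    rw [uIcc_of_le (hpl i), uIcc_of_le hab.le, ← hp0, ← hpN]
    exact Icc_subset_Icc (hpm (Nat.zero_le _)) (hpm (by omega))
  have j1 : IntervalIntegrable f volume a b :=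
    (intervalIntegrable_iff_integrableOn_Ioo_of_le hab.le).2 hf
  have j2 : IntervalIntegrable (fun x => ‖f x‖^2) volume a b :=
    (intervalIntegrable_iff_integrableOn_Ioo_of_le hab.le).2 hf2
  refine ⟨∑ i ∈ Finset.range (N+1), ((∫ x in (p i)..(p (i+1)), ‖f x‖^2) -
    h⁻¹ * ‖∫ x in (p i)..(p (i+1)), f x‖^2), fun v => ?_⟩
  rw [← integral_Ioc_eq_integral_Ioo, ← intervalIntegral.integral_of_le hab.le]
  have hcell : ∀ i, EqOn (fun x => ‖v (auxIdx a h x) - f x‖^2) (fun x => ‖v i - f x‖^2)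
      (Ioo (p i) (p (i+1))) := by
    intro i x hx
    have : auxIdx a h x = i := auxIdx_eq hh hx.1.le (by have := hx.2; simp only [p] at this; push_cast at this; exact this)
    simp only [this]
  have hint : ∀ i < N+1, IntervalIntegrable (fun x => ‖v (auxIdx a h x) - f x‖^2) volume (p i) (p (i+1)) := by
    intro i hi
    have := (aux_cell hh (hp i) f (v i) (j1.mono_set (sub i hi)) (j2.mono_set (sub i hi))).1
    rw [intervalIntegrable_iff_integrableOn_Ioo_of_le (hpl i)] at this ⊢
    exact this.congr_fun (fun x hx => ((hcell i) hx).symm) measurableSet_Ioo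
  have hsum := intervalIntegral.sum_integral_adjacent_intervals (μ := volume) (n := N+1) (a := p) hint
  rw [hp0, hpN] at hsum
  rw [← hsum, Finset.mul_sum, ← Finset.sum_add_distrib]
  refine Finset.sum_congr rfl fun i hi => ?_
  rw [Finset.mem_range] at hi
  have := (aux_cell hh (hp i) f (v i) (j1.mono_set (sub i hi)) (j2.mono_set (sub i hi))).2
  have e2 : ∫ x in (p i)..(p (i+1)), ‖v (auxIdx a h x) - f x‖^2 =
      ∫ x in (p i)..(p (i+1)), ‖v i - f x‖^2 := by
    rw [intervalIntegral.integral_of_le (hpl i), intervalIntegral.integral_of_le (hpl i),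
      integral_Ioc_eq_integral_Ioo, integral_Ioc_eq_integral_Ioo]
    exact setIntegral_congr_fun measurableSet_Ioo (hcell i)
  rw [e2, this]
  rfl

theorem aux_shift {F : Type*} [NormedAddCommGroup F] [NormedSpace ℝ F] (a h : ℝ) (i : ℕ) (g : ℝ → F) :
    auxAvg a h g (i+1) = h⁻¹ • ∫ x in (a + i * h)..(a + (i+1 : ℕ) * h), g (x + h) := by
  unfold auxAvg
  rw [intervalIntegral.integral_comp_add_right]
  congr 2 <;> (push_cast; ring)

theorem aux_avg_bound {E : Type*} [NormedAddCommGroup E] [NormedSpace ℝ E] [CompleteSpace E]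
    {a h : ℝ} (hh : 0 < h) (f : ℝ → E) (V : ℝ → ℝ) (hV : Monotone V) (i : ℕ)
    (hf1 : IntervalIntegrable f volume (a + i * h) (a + (i+1 : ℕ) * h))
    (hf2 : IntervalIntegrable f volume (a + (i+1 : ℕ) * h) (a + (i+1+1 : ℕ) * h))
    (hfV : ∀ x y, a + i * h ≤ x → x ≤ y → y ≤ a + (i+1+1 : ℕ) * h → dist (f x) (f y) ≤ V y - V x) :
    ‖auxAvg a h f (i+1) - auxAvg a h f i‖ ≤ auxAvg a h V (i+1) - auxAvg a h V i := by
  have hle : a + i * h ≤ a + (i+1 : ℕ) * h := by push_cast; linarith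
  have hfs : IntervalIntegrable (fun x => f (x + h)) volume (a + i * h) (a + (i+1 : ℕ) * h) := by
    have := hf2.comp_add_right h
    convert! this using 1 <;> (push_cast; ring)
  have hVi : ∀ p q, IntervalIntegrable V volume p q := fun p q => hV.intervalIntegrable
  have hVs : IntervalIntegrable (fun x => V (x + h)) volume (a + i * h) (a + (i+1 : ℕ) * h) :=
    Monotone.intervalIntegrable (fun x y hxy => hV (by linarith))
  rw [aux_shift, aux_shift]
  unfold auxAvg
  rw [← smul_sub, ← smul_sub, ← intervalIntegral.integral_sub hfs hf1,
    ← intervalIntegral.integral_sub hVs (hVi _ _), norm_smul, Real.norm_of_nonneg (by positivity),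
    smul_eq_mul]
  gcongr
  refine intervalIntegral.norm_integral_le_of_norm_le hle (Eventually.of_forall fun t ht => ?_)
    (hVs.sub (hVi _ _))
  rw [← dist_eq_norm, dist_comm]
  refine hfV _ _ ht.1.le (by linarith) ?_
  have := ht.2
  push_cast at this ⊢
  linarith

theorem aux_avg_le {a h : ℝ} (hh : 0 < h) (V : ℝ → ℝ) (hV : Monotone V) (i : ℕ) :
    V (a + i * h) ≤ auxAvg a h V i ∧ auxAvg a h V i ≤ V (a + (i+1 : ℕ) * h) := by
  have hle : a + i * h ≤ a + (i+1 : ℕ) * h := by push_cast; linarith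
  have hd : a + (i+1 : ℕ) * h - (a + i * h) = h := by push_cast; ring
  unfold auxAvg
  rw [smul_eq_mul, inv_mul_eq_div, le_div_iff₀ hh, div_le_iff₀ hh]
  constructor
  · have := intervalIntegral.integral_mono_on (f := fun _ => V (a + i * h)) (g := V) (μ := volume) hle
      intervalIntegrable_const hV.intervalIntegrable (fun x hx => hV hx.1)
    rw [intervalIntegral.integral_const, hd, smul_eq_mul] at this
    linarith
  · have := intervalIntegral.integral_mono_on (g := fun _ => V (a + (i+1:ℕ) * h)) (f := V) (μ := volume) hle
      hV.intervalIntegrable intervalIntegrable_const (fun x hx => hV hx.2)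
    rw [intervalIntegral.integral_const, hd, smul_eq_mul] at this
    linarith

theorem aux_step_dist {E : Type*} [NormedAddCommGroup E] [NormedSpace ℝ E] [CompleteSpace E]
    {a b c d h : ℝ} (hh : 0 < h) {N : ℕ} (hN : (N + 1 : ℝ) * h = b - a) (f : ℝ → E)
    (hf : IntegrableOn f (Ioo a b)) (hU : Ioo c d ⊆ Ioo a b) (V : ℝ → ℝ) (hV : Monotone V)
    (hfV : ∀ x ∈ Ioo c d, ∀ y ∈ Ioo c d, x ≤ y → dist (f x) (f y) ≤ V y - V x) (v : ℕ → E)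
    (hv : ∀ i < N, ‖v (i+1) - v i‖ ≤ ‖auxAvg a h f (i+1) - auxAvg a h f i‖) (x y : ℝ)
    (hxy : x ≤ y) (hx : c < x - h) (hy : y + h < d) :
    dist (v (auxIdx a h x)) (v (auxIdx a h y)) ≤ V (y + h) - V (x - h) := by
  have hyI : y ∈ Ioo a b := hU ⟨by linarith, by linarith⟩
  have hxI : x ∈ Ioo a b := hU ⟨by linarith, by linarith⟩
  have hm := auxIdx_mono (a := a) hh hxy
  have hyN := auxIdx_le_N hh hN hyI
  have hx1 := auxIdx_lt (a := a) (x := x) hh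
  have hy1 := auxIdx_le (a := a) (x := y) hh hyI.1.le
  have hint : ∀ p q, c < p → p ≤ q → q < d → IntervalIntegrable f volume p q := by
    intro p q hp hpq hq
    rw [intervalIntegrable_iff_integrableOn_Ioo_of_le hpq]
    exact hf.mono_set ((Ioo_subset_Ioo hp.le hq.le).trans hU)
  have hb : ∀ i, auxIdx a h x ≤ i → i < auxIdx a h y →
      dist (v i) (v (i+1)) ≤ auxAvg a h V (i+1) - auxAvg a h V i := by
    intro i hi1 hi2
    rw [dist_comm, dist_eq_norm]
    refine (hv i (by omega)).trans ?_
    have c1 : (auxIdx a h x : ℝ) * h ≤ i * h := by gcongr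
    have c2 : ((i:ℝ) + 1) * h ≤ auxIdx a h y * h := by
      have : (i:ℝ) + 1 ≤ auxIdx a h y := by exact_mod_cast hi2
      gcongr
    have c3 : c < a + i * h := by linarith
    have c4 : a + (i+1+1 : ℕ) * h < d := by push_cast; linarith
    have c5 : a + i * h ≤ a + (i+1 : ℕ) * h := by push_cast; linarith
    have c6 : a + (i+1 : ℕ) * h ≤ a + (i+1+1 : ℕ) * h := by push_cast; linarith
    refine aux_avg_bound hh f V hV i (hint _ _ c3 c5 (by linarith)) (hint _ _ (by linarith) c6 c4) ?_
    intro s t hs hst ht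
    exact hfV s ⟨by linarith, by linarith⟩ t ⟨by linarith, by linarith⟩ hst
  have := dist_le_Ico_sum_of_dist_le hm (f := v) (d := fun i => auxAvg a h V (i+1) - auxAvg a h V i)
    (fun {k} h1 h2 => hb k h1 h2)
  rw [Finset.sum_Ico_sub _ hm] at this
  have g1 := (aux_avg_le (a := a) hh V hV (auxIdx a h x)).1
  have g2 := (aux_avg_le (a := a) hh V hV (auxIdx a h y)).2
  have g3 : V (x - h) ≤ V (a + auxIdx a h x * h) := hV (by linarith)
  have g4 : V (a + (auxIdx a h y + 1 : ℕ) * h) ≤ V (y + h) := hV (by push_cast; linarith)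
  linarith

def auxV {E : Type*} [PseudoEMetricSpace E] (g : ℝ → E) (s : Set ℝ) (x : ℝ) : ℝ :=
  (eVariationOn g (s ∩ Iic x)).toReal

theorem auxV_ne {E : Type*} [PseudoEMetricSpace E] {g : ℝ → E} {s : Set ℝ}
    (hg : eVariationOn g s ≠ ⊤) (t : Set ℝ) : eVariationOn g (s ∩ t) ≠ ⊤ :=
  ne_top_of_le_ne_top hg (eVariationOn.mono g inter_subset_left)

theorem auxV_mono {E : Type*} [PseudoEMetricSpace E] {g : ℝ → E} {s : Set ℝ}
    (hg : eVariationOn g s ≠ ⊤) : Monotone (auxV g s) := by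
  intro x y hxy
  exact ENNReal.toReal_mono (auxV_ne hg _)
    (eVariationOn.mono g (inter_subset_inter_right _ (Iic_subset_Iic.2 hxy)))

theorem auxV_nonneg {E : Type*} [PseudoEMetricSpace E] {g : ℝ → E} {s : Set ℝ} (x : ℝ) :
    0 ≤ auxV g s x := ENNReal.toReal_nonneg

theorem auxV_le {E : Type*} [PseudoEMetricSpace E] {g : ℝ → E} {s : Set ℝ}
    (hg : eVariationOn g s ≠ ⊤) (x : ℝ) : auxV g s x ≤ (eVariationOn g s).toReal :=
  ENNReal.toReal_mono hg (eVariationOn.mono g inter_subset_left)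

theorem auxV_sub {E : Type*} [PseudoEMetricSpace E] {g : ℝ → E} {s : Set ℝ}
    (hg : eVariationOn g s ≠ ⊤) {x y : ℝ} (hx : x ∈ s) (hxy : x ≤ y) :
    auxV g s y - auxV g s x = (eVariationOn g (s ∩ Icc x y)).toReal := by
  have h1 : s ∩ Iic y = (s ∩ Iic x) ∪ (s ∩ Icc x y) := by
    rw [← inter_union_distrib_left, Iic_union_Icc_eq_Iic hxy]
  have h2 : eVariationOn g (s ∩ Iic y) =
      eVariationOn g (s ∩ Iic x) + eVariationOn g (s ∩ Icc x y) := by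
    rw [h1]
    exact eVariationOn.union g ⟨⟨hx, mem_Iic.2 le_rfl⟩, fun z hz => hz.2⟩
      ⟨⟨hx, left_mem_Icc.2 hxy⟩, fun z hz => hz.2.1⟩
  unfold auxV
  rw [h2, ENNReal.toReal_add (auxV_ne hg _) (auxV_ne hg _)]
  ring

theorem auxV_dist {E : Type*} [PseudoMetricSpace E] {g : ℝ → E} {s : Set ℝ}
    (hg : eVariationOn g s ≠ ⊤) {x y : ℝ} (hx : x ∈ s) (hy : y ∈ s) (hxy : x ≤ y) :
    dist (g x) (g y) ≤ auxV g s y - auxV g s x := by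
  rw [auxV_sub hg hx hxy, dist_edist]
  exact ENNReal.toReal_mono (auxV_ne hg _)
    (eVariationOn.edist_le g ⟨hx, left_mem_Icc.2 hxy⟩ ⟨hy, right_mem_Icc.2 hxy⟩)

/-- Stability estimate for a discrete minimizer. -/
theorem aux_stab {n : ℕ} {a b : ℝ} (hab : a < b) {lam : ℝ} (hlam : 0 < lam)
    {f : ℝ → EuclideanSpace ℝ (Fin n)} (hf : Measurable f) (hf_sq : SqIntOn f (Ioo a b))
    {u : ℝ → EuclideanSpace ℝ (Fin n)} (hu : IsMinimizer lam a b f u)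
    (hT : eVariationOn u (Ioo a b) ≠ ⊤) {h : ℝ} (hh : 0 < h) {N : ℕ}
    (hN : (N + 1 : ℝ) * h = b - a) (v : ℕ → EuclideanSpace ℝ (Fin n))
    (hv : ∀ w, auxD (auxAvg a h f) (h / (2 * lam)) N v ≤ auxD (auxAvg a h f) (h / (2 * lam)) N w) :
    Integrable (fun x => ‖u x - v (auxIdx a h x)‖^2) (volume.restrict (Ioo a b)) ∧
    ∫ x in Ioo a b, ‖u x - v (auxIdx a h x)‖^2 ≤
      2 * ((∫ x in Ioo a b, ‖u (a + (auxIdx a h x + 1/2) * h) - f x‖^2) -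
        ∫ x in Ioo a b, ‖u x - f x‖^2) := by
  obtain ⟨hum, husq, hmin⟩ := hu
  have mem : ∀ {g : ℝ → EuclideanSpace ℝ (Fin n)}, Measurable g →
      (SqIntOn g (Ioo a b) ↔ MemLp g 2 (volume.restrict (Ioo a b))) := by
    intro g hg
    exact (memLp_two_iff_integrable_sq_norm hg.aestronglyMeasurable).symm
  have hfL := (mem hf).1 hf_sq
  have huL := (mem hum).1 husq
  have sq : ∀ {g : ℝ → EuclideanSpace ℝ (Fin n)}, MemLp g 2 (volume.restrict (Ioo a b)) →
      Integrable (fun x => ‖g x‖^2) (volume.restrict (Ioo a b)) := fun hg => 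
    (memLp_two_iff_integrable_sq_norm hg.1).1 hg
  set w : ℝ → EuclideanSpace ℝ (Fin n) := fun x => v (auxIdx a h x) with hw
  have hwm : Measurable w := (measurable_from_nat (f := v)).comp (auxIdx_meas a h)
  have hwL : MemLp w 2 (volume.restrict (Ioo a b)) := by
    refine MemLp.of_bound hwm.aestronglyMeasurable (∑ i ∈ Finset.range (N+1), ‖v i‖) ?_
    refine (ae_restrict_iff' measurableSet_Ioo).2 (Eventually.of_forall fun x hx => ?_)
    exact Finset.single_le_sum (f := fun i => ‖v i‖) (fun _ _ => norm_nonneg _)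
      (Finset.mem_range.2 (Nat.lt_succ_of_le (auxIdx_le_N hh hN hx)))
  have hfi : IntegrableOn f (Ioo a b) := hfL.integrable (by norm_num)
  obtain ⟨C, hC⟩ := aux_fid hab hh hN f hfi hf_sq
  set T := (eVariationOn u (Ioo a b)).toReal with hTdef
  set S := ∑ i ∈ Finset.range N, ‖v (i+1) - v i‖ with hS
  have hSn : 0 ≤ S := by positivity
  have hTn : 0 ≤ T := ENNReal.toReal_nonneg
  set κ := 1 / (2 * lam) with hκ
  have hκ0 : 0 < κ := by positivity
  have hwvar := aux_step_evar hh hN v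
  have hwne : eVariationOn w (Ioo a b) ≠ ⊤ := ne_top_of_le_ne_top ENNReal.ofReal_ne_top hwvar
  have hwS : (eVariationOn w (Ioo a b)).toReal ≤ S := ENNReal.toReal_le_of_le_ofReal hSn hwvar
  have i1 : Integrable (fun x => ‖u x - f x‖^2) (volume.restrict (Ioo a b)) := sq (huL.sub hfL)
  have i2 : Integrable (fun x => ‖w x - f x‖^2) (volume.restrict (Ioo a b)) := sq (hwL.sub hfL)
  have i3 : Integrable (fun x => ‖u x - w x‖^2) (volume.restrict (Ioo a b)) := sq (huL.sub hwL)
  -- midpoint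
  let m : ℝ → EuclideanSpace ℝ (Fin n) := fun x => (1/2:ℝ) • (u x + w x)
  have hmm : Measurable m := (hum.add hwm).const_smul (1/2:ℝ)
  have hmL : MemLp m 2 (volume.restrict (Ioo a b)) := (huL.add hwL).const_smul (1/2:ℝ)
  have hmvar : eVariationOn m (Ioo a b) ≤ ENNReal.ofReal ((T + S)/2) := by
    apply aux_evar_le _ (fun x => (auxV u (Ioo a b) x + auxV w (Ioo a b) x)/2)
    · intro x hx y hy hxy
      have e : dist (m x) (m y) ≤ (dist (u x) (u y) + dist (w x) (w y))/2 := by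
        have : m x - m y = (1/2:ℝ) • ((u x - u y) + (w x - w y)) := by simp only [m]; module
        rw [dist_eq_norm, dist_eq_norm, dist_eq_norm, this, norm_smul, Real.norm_of_nonneg (by norm_num)]
        have := norm_add_le (u x - u y) (w x - w y)
        linarith
      have := auxV_dist hT hx hy hxy
      have := auxV_dist hwne hx hy hxy
      linarith
    · intro x hx y hy hxy
      have := auxV_le hT y
      have := auxV_le hwne y
      have := auxV_nonneg (g := u) (s := Ioo a b) x
      have := auxV_nonneg (g := w) (s := Ioo a b) x
      linarith
  have hE := hmin m hmm ((mem hmm).2 hmL)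
  set A := ∫ x in Ioo a b, ‖u x - f x‖^2 with hA
  set B := ∫ x in Ioo a b, ‖w x - f x‖^2 with hB
  set Q := ∫ x in Ioo a b, ‖u x - w x‖^2 with hQ
  have hmid : ∫ x in Ioo a b, ‖m x - f x‖^2 = A / 2 + B / 2 - Q / 4 := by
    have e : ∀ x, ‖m x - f x‖^2 = (1/2) * ‖u x - f x‖^2 + (1/2) * ‖w x - f x‖^2 - (1/4) * ‖u x - w x‖^2 := by
      intro x
      have pl := parallelogram_law_with_norm ℝ (u x - f x) (w x - f x)
      have e1 : (u x - f x) + (w x - f x) = (2:ℝ) • (m x - f x) := by simp only [m]; module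
      have e2 : (u x - f x) - (w x - f x) = u x - w x := by abel
      rw [e1, e2, norm_smul, Real.norm_of_nonneg (by norm_num)] at pl
      nlinarith
    simp_rw [e]
    have i12 : Integrable (fun x => (1/2) * ‖u x - f x‖^2 + (1/2) * ‖w x - f x‖^2)
        (volume.restrict (Ioo a b)) := (i1.const_mul (1/2)).add (i2.const_mul (1/2))
    rw [integral_sub i12 (i3.const_mul (1/4)),
      integral_add (i1.const_mul (1/2)) (i2.const_mul (1/2)), integral_const_mul, integral_const_mul,
      integral_const_mul]
    rw [← hA, ← hB, ← hQ]; ring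
  have hmidn : 0 ≤ A / 2 + B / 2 - Q / 4 := by
    rw [← hmid]; exact integral_nonneg fun x => by positivity
  have hAn : 0 ≤ A := integral_nonneg fun x => by positivity
  unfold rofEnergy at hE
  rw [hmid, ← ENNReal.ofReal_toReal hT, ← hTdef, ← ENNReal.ofReal_add hTn (by positivity)] at hE
  have hE2 : T + κ * A ≤ (T + S)/2 + κ * (A / 2 + B / 2 - Q / 4) := by
    have h1 := hE.trans (add_le_add_left hmvar _)
    rw [← ENNReal.ofReal_add (by positivity) (by positivity)] at h1
    exact (ENNReal.ofReal_le_ofReal_iff (by positivity)).1 h1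
  -- sampling
  have hsamp := hv (fun i => u (a + (i + 1/2) * h))
  unfold auxD at hsamp
  have hC1 := hC v
  have hC2 := hC (fun i => u (a + (i + 1/2) * h))
  set P := ∫ x in Ioo a b, ‖u (a + (auxIdx a h x + 1/2) * h) - f x‖^2 with hP
  have hSu : ∑ i ∈ Finset.range N, ‖u (a + ((i + 1 : ℕ) + 1/2) * h) - u (a + (i + 1/2) * h)‖ ≤ T := by
    have hin : ∀ i : ℕ, i ≤ N → a + (i + 1/2) * h ∈ Ioo a b := by
      intro i hi
      have h1 : 0 < ((i:ℝ) + 1/2) * h := by positivity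
      have h2 : ((i:ℝ) + 1/2) * h < (N + 1) * h := by
        have : (i:ℝ) ≤ N := by exact_mod_cast hi
        gcongr ?_ * h
        linarith
      constructor <;> linarith
    calc _ ≤ ∑ i ∈ Finset.range N, (auxV u (Ioo a b) (a + ((i + 1 : ℕ) + 1/2) * h) -
          auxV u (Ioo a b) (a + (i + 1/2) * h)) := by
          refine Finset.sum_le_sum fun i hi => ?_
          rw [Finset.mem_range] at hi
          rw [← dist_eq_norm, dist_comm]
          refine auxV_dist hT (hin i (by omega)) (hin (i+1) (by omega)) ?_
          push_cast; linarith
      _ = auxV u (Ioo a b) (a + (N + 1/2) * h) - auxV u (Ioo a b) (a + ((0:ℕ) + 1/2) * h) :=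
          Finset.sum_range_sub (fun i : ℕ => auxV u (Ioo a b) (a + (i + 1/2) * h)) N
      _ ≤ T := by
          have := auxV_le hT (a + (N + 1/2) * h)
          have := auxV_nonneg (g := u) (s := Ioo a b) (a + ((0:ℕ) + 1/2) * h)
          linarith
  refine ⟨i3, ?_⟩
  have hk1 : ∀ X : ℝ, h / (2 * lam) * X = κ * (h * X) := fun X => by rw [hκ]; ring
  rw [hk1, hk1] at hsamp
  have hBv : h * ∑ i ∈ Finset.range (N+1), ‖v i - auxAvg a h f i‖^2 = B - C := by
    rw [hB]; simp only [hw]; linarith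
  rw [hBv] at hsamp
  have hPv : h * ∑ i ∈ Finset.range (N+1), ‖u (a + (i + 1/2) * h) - auxAvg a h f i‖^2 = P - C := by
    linarith
  rw [hPv] at hsamp
  have hfin : κ * Q ≤ κ * (2 * (P - A)) := by
    simp only at hsamp hSu
    nlinarith
  exact le_of_mul_le_mul_left hfin hκ0

theorem aux_approx {n : ℕ} {a b : ℝ} (hab : a < b) {lam : ℝ} (hlam : 0 < lam)
    {f : ℝ → EuclideanSpace ℝ (Fin n)} (hf : Measurable f) (hf_sq : SqIntOn f (Ioo a b))
    {u : ℝ → EuclideanSpace ℝ (Fin n)} (hu : IsMinimizer lam a b f u)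
    (hT : eVariationOn u (Ioo a b) ≠ ⊤) {c d : ℝ} (hU : Ioo c d ⊆ Ioo a b)
    (V : ℝ → ℝ) (hV : Monotone V)
    (hfV : ∀ x ∈ Ioo c d, ∀ y ∈ Ioo c d, x ≤ y → dist (f x) (f y) ≤ V y - V x) :
    ∃ w : ℕ → ℝ → EuclideanSpace ℝ (Fin n),
      (∀ᵐ x ∂(volume.restrict (Ioo a b)), Tendsto (fun k => w k x) atTop (nhds (u x))) ∧
      ∀ x y, x ∈ Ioo c d → y ∈ Ioo c d → x ≤ y → ContinuousAt V x → ContinuousAt V y →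
        Tendsto (fun k => w k x) atTop (nhds (u x)) → Tendsto (fun k => w k y) atTop (nhds (u y)) →
        dist (u x) (u y) ≤ V y - V x := by
  have hum := hu.1
  have hfL : MemLp f 2 (volume.restrict (Ioo a b)) :=
    (memLp_two_iff_integrable_sq_norm hf.aestronglyMeasurable).2 hf_sq
  have huL : MemLp u 2 (volume.restrict (Ioo a b)) :=
    (memLp_two_iff_integrable_sq_norm hum.aestronglyMeasurable).2 hu.2.1
  have hfi : IntegrableOn f (Ioo a b) := hfL.integrable (by norm_num)
  let h : ℕ → ℝ := fun N => (b - a) / ((N:ℝ) + 1)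
  have hh : ∀ N, 0 < h N := fun N => div_pos (by linarith) (by positivity)
  have hN : ∀ N : ℕ, ((N:ℝ) + 1) * h N = b - a := fun N => by
    have : (N:ℝ) + 1 ≠ 0 := by positivity
    simp only [h]; field_simp
  have hlim : Tendsto h atTop (nhds 0) := by
    have := (tendsto_one_div_add_atTop_nhds_zero_nat (𝕜 := ℝ)).const_mul (b - a)
    rw [mul_zero] at this
    refine this.congr fun N => ?_
    simp only [h]; ring
  choose v hv using fun N => auxD_exists (auxAvg a (h N) f) (h N / (2 * lam))
    (div_pos (hh N) (by linarith)) N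
  have hstab := fun N => aux_stab hab hlam hf hf_sq hu hT (hh N) (hN N) (v N) (hv N)
  set T := (eVariationOn u (Ioo a b)).toReal with hTdef
  have hsample : ∀ N, ∀ x ∈ Ioo a b, a + (auxIdx a (h N) x + 1/2) * h N ∈ Ioo a b ∧
      dist (a + (auxIdx a (h N) x + 1/2) * h N) x ≤ h N := by
    intro N x hx
    have h1 := auxIdx_le (hh N) hx.1.le
    have h2 := auxIdx_lt (a := a) (x := x) (hh N)
    have h3 : (auxIdx a (h N) x : ℝ) ≤ N := by exact_mod_cast auxIdx_le_N (hh N) (hN N) hx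
    have h4 : (auxIdx a (h N) x : ℝ) * h N ≤ N * h N := by
      have := (hh N).le
      gcongr
    have h5 : 0 ≤ (auxIdx a (h N) x : ℝ) * h N := mul_nonneg (by positivity) (hh N).le
    have h6 := hN N
    have h7 := hh N
    refine ⟨⟨by linarith, by linarith⟩, ?_⟩
    rw [Real.dist_eq, abs_le]
    constructor <;> linarith
  have hcont : ∀ᵐ x ∂(volume.restrict (Ioo a b)), ContinuousWithinAt u (Ioo a b) x := by
    have hb : BoundedVariationOn u (Ioo a b) := hT
    filter_upwards [hb.locallyBoundedVariationOn.ae_differentiableWithinAt measurableSet_Ioo] with x hx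
    exact hx.continuousWithinAt
  have hPlim : Tendsto (fun N => ∫ x in Ioo a b, ‖u (a + (auxIdx a (h N) x + 1/2) * h N) - f x‖^2)
      atTop (nhds (∫ x in Ioo a b, ‖u x - f x‖^2)) := by
    refine tendsto_integral_of_dominated_convergence (fun x => ‖‖u x - f x‖ + T‖^2) ?_ ?_ ?_ ?_
    · intro N
      have m1 : Measurable fun x => u (a + (auxIdx a (h N) x + 1/2) * h N) :=
        (measurable_from_nat (f := fun i : ℕ => u (a + (i + 1/2) * h N))).comp (auxIdx_meas a (h N))
      exact ((m1.sub hf).norm.pow_const 2).aestronglyMeasurable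
    · have : MemLp (fun x => ‖u x - f x‖ + T) 2 (volume.restrict (Ioo a b)) :=
        (huL.sub hfL).norm.add (memLp_const T)
      exact (memLp_two_iff_integrable_sq_norm this.1).1 this
    · intro N
      refine (ae_restrict_iff' measurableSet_Ioo).2 (Eventually.of_forall fun x hx => ?_)
      have hs := (hsample N x hx).1
      have hd : dist (u (a + (auxIdx a (h N) x + 1/2) * h N)) (u x) ≤ T := by
        rw [dist_edist]
        exact ENNReal.toReal_mono hT (eVariationOn.edist_le u hs hx)
      have ht := dist_triangle (u (a + (auxIdx a (h N) x + 1/2) * h N)) (u x) (f x)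
      rw [dist_eq_norm _ (f x), dist_eq_norm _ (f x)] at ht
      have hTn : 0 ≤ T := ENNReal.toReal_nonneg
      rw [Real.norm_of_nonneg (by positivity), Real.norm_of_nonneg (by positivity)]
      gcongr
      linarith
    · filter_upwards [hcont, ae_restrict_mem measurableSet_Ioo] with x hx hxI
      have hs : Tendsto (fun N => a + (auxIdx a (h N) x + 1/2) * h N) atTop (nhds x) := by
        rw [tendsto_iff_dist_tendsto_zero]
        exact squeeze_zero (fun _ => dist_nonneg) (fun N => (hsample N x hxI).2) hlim
      have hs' : Tendsto (fun N => a + (auxIdx a (h N) x + 1/2) * h N) atTop (nhdsWithin x (Ioo a b)) :=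
        tendsto_nhdsWithin_iff.2 ⟨hs, Eventually.of_forall fun N => (hsample N x hxI).1⟩
      exact (((hx.tendsto.comp hs').sub_const (f x)).norm.pow 2)
  have hQlim : Tendsto (fun N => ∫ x in Ioo a b, ‖u x - v N (auxIdx a (h N) x)‖^2) atTop (nhds 0) := by
    refine squeeze_zero (fun N => integral_nonneg fun x => by positivity) (fun N => (hstab N).2) ?_
    have := (hPlim.sub_const (∫ x in Ioo a b, ‖u x - f x‖^2)).const_mul 2
    rwa [sub_self, mul_zero] at this
  have hmeas : TendstoInMeasure (volume.restrict (Ioo a b))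
      (fun N x => ‖u x - v N (auxIdx a (h N) x)‖^2) atTop (fun _ => (0:ℝ)) := by
    refine tendstoInMeasure_of_tendsto_eLpNorm one_ne_zero (fun N => (hstab N).1.1)
      aestronglyMeasurable_const ?_
    have e : ∀ N, eLpNorm ((fun x => ‖u x - v N (auxIdx a (h N) x)‖^2) - fun _ => (0:ℝ)) 1
        (volume.restrict (Ioo a b)) =
        ENNReal.ofReal (∫ x in Ioo a b, ‖u x - v N (auxIdx a (h N) x)‖^2) := by
      intro N
      have e1 : ((fun x => ‖u x - v N (auxIdx a (h N) x)‖^2) - fun _ => (0:ℝ)) =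
        fun x => ‖u x - v N (auxIdx a (h N) x)‖^2 := by ext x; simp
      rw [e1, eLpNorm_one_eq_lintegral_enorm, ← ofReal_integral_norm_eq_lintegral_enorm (hstab N).1]
      congr 1
      refine integral_congr_ae (Eventually.of_forall fun x => ?_)
      exact Real.norm_of_nonneg (by positivity)
    simp_rw [e]
    have := ENNReal.tendsto_ofReal hQlim
    rwa [ENNReal.ofReal_zero] at this
  obtain ⟨ns, hns, hae⟩ := hmeas.exists_seq_tendsto_ae
  refine ⟨fun k x => v (ns k) (auxIdx a (h (ns k)) x), ?_, ?_⟩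
  · filter_upwards [hae] with x hx
    rw [tendsto_iff_norm_sub_tendsto_zero]
    have := hx.sqrt
    simp only [Real.sqrt_zero] at this
    refine this.congr fun k => ?_
    rw [Real.sqrt_sq (norm_nonneg _), norm_sub_rev]
  · intro x y hx hy hxy hVx hVy hwx hwy
    have hl : Tendsto (fun k => h (ns k)) atTop (nhds 0) := hlim.comp hns.tendsto_atTop
    have l1 : Tendsto (fun k => V (y + h (ns k)) - V (x - h (ns k))) atTop (nhds (V y - V x)) := by
      refine Tendsto.sub ?_ ?_
      · refine hVy.tendsto.comp ?_
        simpa using hl.const_add y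
      · refine hVx.tendsto.comp ?_
        simpa using hl.const_sub x
    refine le_of_tendsto_of_tendsto (hwx.dist hwy) l1 ?_
    have e1 : ∀ᶠ k in atTop, h (ns k) < x - c := hl.eventually_lt_const (by linarith [hx.1])
    have e2 : ∀ᶠ k in atTop, h (ns k) < d - y := hl.eventually_lt_const (by linarith [hy.2])
    filter_upwards [e1, e2] with k hk1 hk2
    refine aux_step_dist (hh _) (hN _) f hfi hU V hV hfV (v (ns k)) ?_ x y hxy (by linarith)
      (by linarith)
    intro i hi
    exact auxD_bound _ _ (div_pos (hh _) (by linarith)) _ _ (hv (ns k)) i hi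

/-- if `f` has bounded variation on an open subinterval `U = Ioo c d` of `I`,
then the ROF minimizer `u` has a representative `ubar` (equal to `u` a.e. on `I`) whose
total variation over every closed subinterval `[c',d'] ⊆ U` is at most that of `f`. -/
theorem tv_minimizer_le_tv_datum_on_closed_subintervals
    {n : ℕ} (hn : 1 ≤ n) (a b : ℝ) (hab : a < b) (lam : ℝ) (hlam : 0 < lam)
    (f : ℝ → EuclideanSpace ℝ (Fin n)) (hf_meas : Measurable f)
    (hf_sq : SqIntOn f (Set.Ioo a b))
    (c d : ℝ) (hU : Set.Ioo c d ⊆ Set.Ioo a b)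
    (hfBV : eVariationOn f (Set.Ioo c d) < ⊤)
    (u : ℝ → EuclideanSpace ℝ (Fin n)) (hu : IsMinimizer lam a b f u) :
    ∃ ubar : ℝ → EuclideanSpace ℝ (Fin n),
      (∀ᵐ x ∂(MeasureTheory.volume.restrict (Set.Ioo a b)), ubar x = u x) ∧
      ∀ c' d' : ℝ, Set.Icc c' d' ⊆ Set.Ioo c d →
        eVariationOn ubar (Set.Icc c' d') ≤ eVariationOn f (Set.Icc c' d') := by
  have hum := hu.1
  have hT : eVariationOn u (Ioo a b) ≠ ⊤ := by
    have h0 := hu.2.2 (fun _ => 0) measurable_const (by unfold SqIntOn; simp)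
    unfold rofEnergy at h0
    have hz : eVariationOn (fun _ : ℝ => (0 : EuclideanSpace ℝ (Fin n))) (Ioo a b) = 0 :=
      eVariationOn.constant_on (by
        rintro _ ⟨x, _, rfl⟩ _ ⟨y, _, rfl⟩
        rfl)
    rw [hz, zero_add] at h0
    exact ne_top_of_le_ne_top ENNReal.ofReal_ne_top (le_self_add.trans h0)
  have hF : eVariationOn f (Ioo c d) ≠ ⊤ := hfBV.ne
  set V := auxV f (Ioo c d) with hVdef
  have hV : Monotone V := auxV_mono hF
  have hfV : ∀ x ∈ Ioo c d, ∀ y ∈ Ioo c d, x ≤ y → dist (f x) (f y) ≤ V y - V x :=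
    fun x hx y hy hxy => auxV_dist hF hx hy hxy
  obtain ⟨w, hwconv, hwdist⟩ := aux_approx hab hlam hf_meas hf_sq hu hT hU V hV hfV
  let G : Set ℝ := {x | x ∈ Ioo c d ∧ ContinuousAt V x ∧
    Tendsto (fun k => w k x) atTop (nhds (u x))}
  have hGae : ∀ᵐ x, x ∈ Ioo c d → x ∈ G := by
    have h1 : ∀ᵐ x, ContinuousAt V x := by
      rw [ae_iff]
      exact hV.countable_not_continuousAt.measure_zero _
    filter_upwards [h1, (ae_restrict_iff' measurableSet_Ioo).1 hwconv] with x hx1 hx2 hx3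
    exact ⟨hx3, hx1, hx2 (hU hx3)⟩
  have hdense : ∀ p q, c ≤ p → p < q → q ≤ d → ∃ g ∈ G, p < g ∧ g < q := by
    intro p q hp hpq hq
    obtain ⟨g, hg1, hg2⟩ := (Measure.dense_of_ae hGae).exists_between hpq
    exact ⟨g, hg1 ⟨by linarith [hg2.1], by linarith [hg2.2]⟩, hg2.1, hg2.2⟩
  have hGd : ∀ x ∈ G, ∀ y ∈ G, x ≤ y → dist (u x) (u y) ≤ V y - V x := by
    intro x hx y hy hxy
    exact hwdist x y hx.1 hy.1 hxy hx.2.1 hy.2.1 hx.2.2 hy.2.2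
  have hext : ∀ x, ∃ e, x ∈ Ioo c d → ((x ∈ G → e = u x) ∧
      (∀ g ∈ G, g < x → dist (u g) e ≤ V x - V g) ∧
      (∀ g ∈ G, x < g → dist e (u g) ≤ V g - V x)) := by
    intro x
    by_cases hx : x ∈ Ioo c d
    · by_cases hxG : x ∈ G
      · exact ⟨u x, fun _ => ⟨fun _ => rfl, fun g hg hgx => hGd g hg x hxG hgx.le,
          fun g hg hgx => hGd x hxG g hg hgx.le⟩⟩
      · obtain ⟨g1, hg1, _, hg1x⟩ := hdense c x le_rfl hx.1 hx.2.le
        obtain ⟨g2, hg2, hg2x, _⟩ := hdense x d hx.1.le hx.2 le_rfl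
        obtain ⟨e, he⟩ := aux_onepoint V hV G u hGd x ⟨g1, hg1, hg1x⟩ ⟨g2, hg2, hg2x⟩
        exact ⟨e, fun _ => ⟨fun h => absurd h hxG, he⟩⟩
    · exact ⟨0, fun h => absurd h hx⟩
  choose e he using hext
  classical
  refine ⟨fun x => if x ∈ Ioo c d then e x else u x, ?_, ?_⟩
  · refine ae_restrict_of_ae ?_
    filter_upwards [hGae] with x hx
    by_cases hxU : x ∈ Ioo c d
    · rw [if_pos hxU]
      exact (he x hxU).1 (hx hxU)
    · rw [if_neg hxU]
  · intro c' d' hcd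
    rcases lt_or_ge d' c' with hlt | hle
    · rw [Icc_eq_empty (not_le.2 hlt)]
      simp
    · have hc' : c' ∈ Ioo c d := hcd (left_mem_Icc.2 hle)
      have hsub := auxV_sub hF hc' hle
      rw [inter_eq_right.2 hcd] at hsub
      have hne : eVariationOn f (Icc c' d') ≠ ⊤ :=
        ne_top_of_le_ne_top hF (eVariationOn.mono f hcd)
      rw [← ENNReal.ofReal_toReal hne, ← hsub]
      refine aux_evar_le _ V _ _ ?_ ?_
      · intro x hx y hy hxy
        simp only [if_pos (hcd hx), if_pos (hcd hy)]
        rcases hxy.eq_or_lt with rfl | hlt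
        · simp
        · obtain ⟨g, hg, hg1, hg2⟩ := hdense x y (hcd hx).1.le hlt (hcd hy).2.le
          have t := dist_triangle (e x) (u g) (e y)
          have t1 := (he x (hcd hx)).2.2 g hg hg1
          have t2 := (he y (hcd hy)).2.1 g hg hg2
          linarith
      · intro x hx y hy _
        have t1 := hV hx.1
        have t2 := hV hy.2
        linarith
end
end

section
/- Let u be a minimizer of the energy E, and let U ⊆ I be an open interval such that the restriction of f to U is Lipschitz with constant L ≥ 0. Then there is a function ū equal to u almost everywhere on I whose restriction to U is Lipschitz with the same constant L. -/
open MeasureTheory Set Filter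
open scoped ENNReal

noncomputable section

structure RData {E : Type*} [NormedAddCommGroup E] [InnerProductSpace ℝ E] [CompleteSpace E]
    (c d L K lam : ℝ) (u f w z : ℝ → E) (V : ℝ → ℝ → ℝ) : Prop where
  hL : 0 ≤ L
  hK : 0 ≤ K
  hlam : 0 < lam
  hV : ∀ s t p q, c < s → t < d → s ≤ p → p ≤ t → s ≤ q → q ≤ t → ‖u p - u q‖ ≤ V s t
  hVm : ∀ s t s' t', c < s → t < d → s ≤ s' → s' ≤ t' → t' ≤ t → V s' t' ≤ V s t
  hw : ∀ t, u t = f t + lam • w t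
  hwK : ∀ t ∈ Ioo c d, ‖w t‖ ≤ K
  hwi : ∀ x ∈ Ioo c d, ∀ y ∈ Ioo c d, IntervalIntegrable w volume x y
  hz : ∀ x ∈ Ioo c d, ∀ y ∈ Ioo c d, z y - z x = ∫ t in x..y, w t
  hz1 : ∀ x ∈ Ioo c d, ‖z x‖ ≤ 1
  h3 : ∀ s x t, c < s → s ≤ x → x ≤ t → t < d →
    V s t ≤ inner ℝ (z x) (u t - u s) + K * (t - s) * V s t
  hf : ∀ x ∈ Ioo c d, ∀ y ∈ Ioo c d, ‖f y - f x‖ ≤ L * |y - x|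

section
variable {E : Type*} [NormedAddCommGroup E] [InnerProductSpace ℝ E] [CompleteSpace E]
  {c d L K lam : ℝ} {u f w z : ℝ → E} {V : ℝ → ℝ → ℝ}

lemma RData.zint (H : RData c d L K lam u f w z V) (e : E) {x y : ℝ} (hx : x ∈ Ioo c d)
    (hy : y ∈ Ioo c d) : inner ℝ e (z y - z x) = ∫ t in x..y, inner ℝ e (w t) := by
  rw [H.hz x hx y hy]
  exact ((innerSL ℝ e).intervalIntegral_comp_comm (H.hwi x hx y hy)).symm

lemma RData.innerI (H : RData c d L K lam u f w z V) (e : E) {x y : ℝ} (hx : x ∈ Ioo c d)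
    (hy : y ∈ Ioo c d) : IntervalIntegrable (fun t => inner ℝ e (w t)) volume x y := by
  have := H.hwi x hx y hy
  exact ⟨(innerSL ℝ e).integrable_comp this.1, (innerSL ℝ e).integrable_comp this.2⟩

lemma RData.fcont (H : RData c d L K lam u f w z V) : ContinuousOn f (Ioo c d) := by
  have : LipschitzOnWith (Real.toNNReal L) f (Ioo c d) := by
    apply LipschitzOnWith.of_dist_le_mul
    intro x hx y hy
    rw [dist_eq_norm, Real.dist_eq, Real.coe_toNNReal _ H.hL]
    exact H.hf y hy x hx
  exact this.continuousOn

lemma RData.zcont (H : RData c d L K lam u f w z V) {x y : ℝ} (hx : x ∈ Ioo c d)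
    (hy : y ∈ Ioo c d) : ‖z y - z x‖ ≤ K * |y - x| := by
  rw [H.hz x hx y hy]
  apply intervalIntegral.norm_integral_le_of_norm_le_const
  intro t ht
  apply H.hwK
  rcases le_total x y with h | h
  · rw [uIoc_of_le h] at ht
    exact ⟨hx.1.trans ht.1, ht.2.trans_lt hy.2⟩
  · rw [uIoc_of_ge h] at ht
    exact ⟨hy.1.trans ht.1, ht.2.trans_lt hx.2⟩

lemma RData.pair_int (H : RData c d L K lam u f w z V) {x y δ η : ℝ} (hδ : 0 < δ)
    (hx : c < x - δ) (hxy : x ≤ y) (hy : y + δ < d) (zx : ‖z x‖ = 1) (zy : ‖z y‖ = 1)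
    (hη : ∀ p ∈ Icc x y, ∀ q ∈ Icc y (y + δ), - inner ℝ (w p) (w q) ≤ η) :
    inner ℝ (z x) (z (y + δ) - z y) + inner ℝ (z x) (z (x - δ) - z x) ≤ η * (y - x) * δ := by
  have mx : x ∈ Ioo c d := ⟨by linarith, by linarith⟩
  have my : y ∈ Ioo c d := ⟨by linarith, by linarith⟩
  have mx' : x - δ ∈ Ioo c d := ⟨by linarith, by linarith⟩
  have my' : y + δ ∈ Ioo c d := ⟨by linarith, by linarith⟩
  have key : ∀ p q, p ∈ Ioo c d → q ∈ Ioo c d → ‖z p‖ = 1 → inner ℝ (z p) (z q - z p) ≤ 0 := by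
    intro p q hp hq h
    rw [inner_sub_right, real_inner_self_eq_norm_sq, h]
    have := real_inner_le_norm (z p) (z q)
    rw [h] at this
    linarith [H.hz1 q hq]
  have h1 := key x _ mx mx' zx
  have h2 := key y _ my my' zy
  have h3 : ∀ p ∈ Icc x y, - (η * δ) ≤ inner ℝ (z (y + δ) - z y) (w p) := by
    intro p hp
    rw [real_inner_comm, H.zint _ my my']
    have : ∫ t in y..(y+δ), (-η) ≤ ∫ t in y..(y+δ), inner ℝ (w p) (w t) := by
      apply intervalIntegral.integral_mono_on (by linarith) (by simp) (H.innerI _ my my')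
      intro q hq
      linarith [hη p hp q hq]
    simp at this
    linarith
  have h4 : -(η * δ) * (y - x) ≤ inner ℝ (z (y + δ) - z y) (z y - z x) := by
    rw [H.zint _ mx my]
    have : ∫ t in x..y, (-(η * δ)) ≤ ∫ t in x..y, inner ℝ (z (y + δ) - z y) (w t) := by
      apply intervalIntegral.integral_mono_on hxy (by simp) (H.innerI _ mx my)
      exact h3
    simp at this
    linarith
  have h5 : inner ℝ (z x) (z (y + δ) - z y) = inner ℝ (z y) (z (y + δ) - z y)
      - inner ℝ (z (y + δ) - z y) (z y - z x) := by
    rw [real_inner_comm (z y - z x), inner_sub_left (z y) (z x)]; ring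
  nlinarith

lemma RData.pair (H : RData c d L K lam u f w z V) {x y δ η : ℝ} (hδ : 0 < δ)
    (hx : c < x - δ) (hxy : x ≤ y) (hy : y + δ < d) (zx : ‖z x‖ = 1) (zy : ‖z y‖ = 1)
    (hη : ∀ p ∈ Icc x y, ∀ q ∈ Icc y (y + δ), - inner ℝ (w p) (w q) ≤ η) :
    ∃ θ ∈ Ioo 0 δ, V (x - δ + θ) (y + θ) * (1 - K * (y - x + δ)) ≤
      L * (y - x + δ) + lam * η * (y - x) + δ := by
  by_contra hcon
  push Not at hcon
  set B := L * (y - x + δ) + lam * η * (y - x) + δ with hB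
  have mx : x ∈ Ioo c d := ⟨by linarith, by linarith⟩
  have my : y ∈ Ioo c d := ⟨by linarith, by linarith⟩
  have mx' : x - δ ∈ Ioo c d := ⟨by linarith, by linarith⟩
  have my' : y + δ ∈ Ioo c d := ⟨by linarith, by linarith⟩
  have hP := H.pair_int hδ hx hxy hy zx zy hη
  -- pointwise
  have pt : ∀ θ ∈ Ioo 0 δ, B - L * (y - x + δ) ≤
      lam * (inner ℝ (z x) (w (y + θ)) - inner ℝ (z x) (w (x - δ + θ))) := by
    intro θ hθ
    have a1 := hcon θ hθ
    have a2 := H.h3 (x - δ + θ) x (y + θ) (by linarith [hθ.1]) (by linarith [hθ.2])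
      (by linarith [hθ.1]) (by linarith [hθ.2])
    have a3 := H.hf (x - δ + θ) ⟨by linarith [hθ.1], by linarith [hθ.2]⟩ (y + θ)
      ⟨by linarith [hθ.1], by linarith [hθ.2]⟩
    rw [show y + θ - (x - δ + θ) = y - x + δ by ring] at a2 a3
    rw [abs_of_nonneg (by linarith)] at a3
    have a4 := real_inner_le_norm (z x) (f (y + θ) - f (x - δ + θ))
    rw [zx, one_mul] at a4
    have a5 : inner ℝ (z x) (u (y + θ) - u (x - δ + θ)) =
      inner ℝ (z x) (f (y + θ) - f (x - δ + θ)) +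
        lam * (inner ℝ (z x) (w (y + θ)) - inner ℝ (z x) (w (x - δ + θ))) := by
      rw [H.hw, H.hw]
      simp only [inner_sub_right, inner_add_right, inner_smul_right]; ring
    nlinarith
  have i1 : IntervalIntegrable (fun θ => inner ℝ (z x) (w (y + θ))) volume 0 δ := by
    have := (H.innerI (z x) my my').comp_add_left y
    simpa using this
  have i2 : IntervalIntegrable (fun θ => inner ℝ (z x) (w (x - δ + θ))) volume 0 δ := by
    have := (H.innerI (z x) mx' mx).comp_add_left (x - δ)
    simpa using this
  have I : ∫ θ in (0:ℝ)..δ, (B - L * (y - x + δ)) ≤ ∫ θ in (0:ℝ)..δ,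
      lam * (inner ℝ (z x) (w (y + θ)) - inner ℝ (z x) (w (x - δ + θ))) := by
    apply intervalIntegral.integral_mono_on_of_le_Ioo hδ.le (by simp) ((i1.sub i2).const_mul _)
    exact pt
  rw [intervalIntegral.integral_const_mul, intervalIntegral.integral_sub i1 i2,
    intervalIntegral.integral_comp_add_left (fun t => inner ℝ (z x) (w t)),
    intervalIntegral.integral_comp_add_left (fun t => inner ℝ (z x) (w t))] at I
  simp only [add_zero, sub_add_cancel, intervalIntegral.integral_const, smul_eq_mul, sub_zero] at I
  rw [← H.zint _ my my', ← H.zint _ mx' mx] at I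
  have e : inner ℝ (z x) (z x - z (x - δ)) = - inner ℝ (z x) (z (x - δ) - z x) := by
    rw [← inner_neg_right]; simp
  rw [e, hB] at I
  have := mul_le_mul_of_nonneg_left hP H.hlam.le
  nlinarith [mul_pos hδ hδ]

lemma RData.noncontact (H : RData c d L K lam u f w z V) {x : ℝ} (hx : x ∈ Ioo c d)
    (zx : ‖z x‖ < 1) : ∀ᶠ y in nhds x, u y = u x := by
  obtain ⟨r, hr, hr'⟩ : ∃ r > 0, K * r < 1 - ‖z x‖ := by
    refine ⟨(1 - ‖z x‖) / (2 * (K + 1)), ?_, ?_⟩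
    · have := H.hK
      apply div_pos <;> linarith
    · have := H.hK
      rw [← mul_div_assoc, div_lt_iff₀ (by linarith)]
      nlinarith
  have key : ∀ s t, c < s → s ≤ x → x ≤ t → t < d → t - s < r → u t = u s := by
    intro s t h1 h2 h3 h4 h5
    have a := H.h3 s x t h1 h2 h3 h4
    have b := H.hV s t t s h1 h4 (by linarith) le_rfl le_rfl (by linarith)
    have e := real_inner_le_norm (z x) (u t - u s)
    have V0 : 0 ≤ V s t := (norm_nonneg _).trans b
    have : ‖z x‖ * ‖u t - u s‖ ≤ ‖z x‖ * V s t := by gcongr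
    have : K * (t - s) * V s t ≤ K * r * V s t := by
      have := H.hK
      gcongr
    have V1 : V s t ≤ 0 := by
      by_contra hh
      push Not at hh
      nlinarith
    have : ‖u t - u s‖ ≤ 0 := by linarith
    rw [norm_le_zero_iff, sub_eq_zero] at this
    exact this
  filter_upwards [Ioo_mem_nhds hx.1 hx.2, Ioo_mem_nhds (show x - r < x by linarith)
    (show x < x + r by linarith)] with y h1 h2
  rcases le_total x y with h | h
  · exact key x y hx.1 le_rfl h h1.2 (by linarith [h2.2])
  · exact (key y x h1.1 h le_rfl hx.2 (by linarith [h2.1])).symm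

lemma RData.eta (H : RData c d L K lam u f w z V) {p q : ℝ} (hp : p ∈ Ioo c d)
    (hq : q ∈ Ioo c d) : - inner ℝ (w p) (w q) ≤ K ^ 2 := by
  have := abs_real_inner_le_norm (w p) (w q)
  have h2 : ‖w p‖ * ‖w q‖ ≤ K * K := by
    have := H.hK
    gcongr
    · exact H.hwK p hp
    · exact H.hwK q hq
  have := (abs_le.1 this).1
  nlinarith

lemma RData.ucont (H : RData c d L K lam u f w z V) {x : ℝ} (hx : x ∈ Ioo c d) :
    ContinuousAt u x := by
  rcases (H.hz1 x hx).lt_or_eq with zx | zx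
  · exact ContinuousAt.congr continuousAt_const
      ((H.noncontact hx zx).mono fun y hy => hy.symm)
  · rw [Metric.continuousAt_iff]
    intro ε hε
    have hK := H.hK
    have hL := H.hL
    obtain ⟨δ, hδ0, h1, h2, h3, h4⟩ : ∃ δ > 0, c < x - δ ∧ x + δ < d ∧ K * δ ≤ 1/2 ∧
        2 * (L + 1) * δ < ε := by
      have e1 : ∀ᶠ δ in nhdsWithin (0:ℝ) (Ioi 0), c < x - δ := by
        apply Filter.Eventually.filter_mono nhdsWithin_le_nhds
        apply ContinuousAt.eventually_lt (by fun_prop) (by fun_prop); simpa using hx.1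
      have e2 : ∀ᶠ δ in nhdsWithin (0:ℝ) (Ioi 0), x + δ < d := by
        apply Filter.Eventually.filter_mono nhdsWithin_le_nhds
        apply ContinuousAt.eventually_lt (by fun_prop) (by fun_prop); simpa using hx.2
      have e3 : ∀ᶠ δ in nhdsWithin (0:ℝ) (Ioi 0), K * δ < 1/2 := by
        apply Filter.Eventually.filter_mono nhdsWithin_le_nhds
        apply ContinuousAt.eventually_lt (by fun_prop) (by fun_prop); simp
      have e4 : ∀ᶠ δ in nhdsWithin (0:ℝ) (Ioi 0), 2 * (L + 1) * δ < ε := by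
        apply Filter.Eventually.filter_mono nhdsWithin_le_nhds
        apply ContinuousAt.eventually_lt (by fun_prop) (by fun_prop); simpa using hε
      obtain ⟨δ, a, b, cc, dd, ee⟩ := (eventually_mem_nhdsWithin.and
        (e1.and (e2.and (e3.and e4)))).exists
      exact ⟨δ, a, b, cc, dd.le, ee⟩
    obtain ⟨θ, hθ, hh⟩ := H.pair (η := K ^ 2) hδ0 h1 le_rfl h2 zx zx (by
      intro p hp q hq
      exact H.eta ⟨by linarith [hp.1], by linarith [hp.2]⟩ ⟨by linarith [hq.1], by linarith [hq.2]⟩)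
    simp only [sub_self, zero_add, mul_zero, add_zero] at hh
    have hVV := H.hV (x - δ + θ) (x + θ) x x (by linarith [hθ.1]) (by linarith [hθ.2])
      (by linarith [hθ.2]) (by linarith [hθ.1]) (by linarith [hθ.2]) (by linarith [hθ.1])
    simp at hVV
    refine ⟨min θ (δ - θ), lt_min hθ.1 (by linarith [hθ.2]), ?_⟩
    intro y hy
    rw [Real.dist_eq, lt_min_iff, abs_lt, abs_lt] at hy
    rw [dist_eq_norm]
    have := H.hV (x - δ + θ) (x + θ) y x (by linarith [hθ.1]) (by linarith [hθ.2])
      (by linarith [hθ.2]) (by linarith [hθ.1]) (by linarith [hθ.2]) (by linarith [hθ.1])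
    nlinarith

lemma RData.gap (H : RData c d L K lam u f w z V) {x y : ℝ} (hx : c < x) (hy : y < d)
    (hxy : x ≤ y) (hg : ∀ t ∈ Ioo x y, ‖z t‖ < 1) : u x = u y := by
  rcases hxy.eq_or_lt with rfl | hxy
  · rfl
  obtain ⟨t, ht, h⟩ := exists_hasDerivAt_eq_slope (fun t => inner ℝ (u y - u x) (u t)) (fun _ => 0)
    hxy (by
      apply ContinuousOn.inner continuousOn_const
      intro t ht
      exact (H.ucont ⟨hx.trans_le ht.1, ht.2.trans_lt hy⟩).continuousWithinAt) (by
      intro t ht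
      have := H.noncontact ⟨hx.trans ht.1, ht.2.trans hy⟩ (hg t ht)
      refine (hasDerivAt_const t (inner ℝ (u y - u x) (u t))).congr_of_eventuallyEq ?_
      filter_upwards [this] with s hs
      rw [hs])
  have : inner ℝ (u y - u x) (u y) - inner ℝ (u y - u x) (u x) = 0 := by
    rw [eq_comm, div_eq_zero_iff] at h
    rcases h with h | h
    · exact h
    · linarith
  rw [← inner_sub_right, inner_self_eq_zero, sub_eq_zero] at this
  exact this.symm

/-- Bound for nearby points. -/
lemma RData.near (H : RData c d L K lam u f w z V) {x y r η : ℝ} (hx : c < x) (hy : y < d)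
    (hxy : x < y) (hr : y - x < r) (hη0 : 0 ≤ η)
    (hη : ∀ p ∈ Ioo c d, ∀ q ∈ Ioo c d, |q - p| ≤ r → - inner ℝ (w p) (w q) ≤ η) :
    ‖u y - u x‖ * (1 - K * (y - x)) ≤ (L + lam * η) * (y - x) := by
  have hK := H.hK
  have hL := H.hL
  have hlam := H.hlam
  have hzc : ContinuousOn z (Ioo c d) := by
    have : LipschitzOnWith (Real.toNNReal K) z (Ioo c d) := by
      apply LipschitzOnWith.of_dist_le_mul
      intro x hx y hy
      rw [dist_eq_norm, Real.dist_eq, Real.coe_toNNReal _ H.hK]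
      exact H.zcont hy hx
    exact this.continuousOn
  have hsub : Icc x y ⊆ Ioo c d := fun t ht => ⟨hx.trans_le ht.1, ht.2.trans_lt hy⟩
  set S : Set ℝ := Icc x y ∩ (fun t => ‖z t‖) ⁻¹' {1} with hS
  have Scl : IsClosed S :=
    ContinuousOn.preimage_isClosed_of_isClosed (hzc.mono hsub).norm isClosed_Icc isClosed_singleton
  have Sc : IsCompact S := isCompact_Icc.of_isClosed_subset Scl inter_subset_left
  have hR : 0 ≤ (L + lam * η) * (y - x) := by
    have : 0 ≤ y - x := by linarith
    positivity
  rcases S.eq_empty_or_nonempty with hE | hE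
  · have : u x = u y := by
      apply H.gap hx hy hxy.le
      intro t ht
      apply lt_of_le_of_ne (H.hz1 t (hsub (Ioo_subset_Icc_self ht)))
      intro h
      have : t ∈ S := ⟨Ioo_subset_Icc_self ht, h⟩
      rw [hE] at this
      exact this
    rw [this]
    simpa using hR
  · obtain ⟨p, hp⟩ := Sc.exists_isLeast hE
    obtain ⟨q, hq⟩ := Sc.exists_isGreatest hE
    have hpq : p ≤ q := hp.2 hq.1
    have up : u x = u p := by
      apply H.gap hx (hsub hp.1.1).2 hp.1.1.1
      intro t ht
      have hm : t ∈ Icc x y := ⟨ht.1.le, ht.2.le.trans hp.1.1.2⟩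
      apply lt_of_le_of_ne (H.hz1 t (hsub hm))
      intro h
      have := hp.2 ⟨hm, h⟩
      linarith [ht.2]
    have uq : u q = u y := by
      apply H.gap (hsub hq.1.1).1 hy hq.1.1.2
      intro t ht
      have hm : t ∈ Icc x y := ⟨hq.1.1.1.trans ht.1.le, ht.2.le⟩
      apply lt_of_le_of_ne (H.hz1 t (hsub hm))
      intro h
      have := hq.2 ⟨hm, h⟩
      linarith [ht.1]
    rw [up, ← uq]
    have hxp := hp.1.1.1
    have hqy := hq.1.1.2
    have main : ∀ᶠ δ in nhdsWithin (0:ℝ) (Ioi 0), ‖u q - u p‖ * (1 - K * (y - x + δ)) ≤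
        L * (y - x + δ) + lam * η * (y - x) + δ + ‖u q - u p‖ * δ := by
      have e1 : ∀ᶠ δ in nhdsWithin (0:ℝ) (Ioi 0), c < p - δ := by
        apply Filter.Eventually.filter_mono nhdsWithin_le_nhds
        apply ContinuousAt.eventually_lt (by fun_prop) (by fun_prop); simp; linarith
      have e2 : ∀ᶠ δ in nhdsWithin (0:ℝ) (Ioi 0), q + δ < d := by
        apply Filter.Eventually.filter_mono nhdsWithin_le_nhds
        apply ContinuousAt.eventually_lt (by fun_prop) (by fun_prop); simp; linarith
      have e3 : ∀ᶠ δ in nhdsWithin (0:ℝ) (Ioi 0), y - x + δ < r := by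
        apply Filter.Eventually.filter_mono nhdsWithin_le_nhds
        apply ContinuousAt.eventually_lt (by fun_prop) (by fun_prop); simp; linarith
      filter_upwards [e1, e2, e3, self_mem_nhdsWithin] with δ h1 h2 h3 (h4 : 0 < δ)
      obtain ⟨θ, hθ, hh⟩ := H.pair (η := η) h4 h1 hpq h2 hp.1.2 hq.1.2 (by
        intro s hs t ht
        apply hη
        · exact ⟨by linarith [hs.1], by linarith [hs.2]⟩
        · exact ⟨by linarith [ht.1, hs.1], by linarith [ht.2]⟩
        · rw [abs_le]
          constructor <;> linarith [hs.1, hs.2, ht.1, ht.2])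
      have v := H.hV (p - δ + θ) (q + θ) q p (by linarith [hθ.1]) (by linarith [hθ.2])
        (by linarith [hθ.2]) (by linarith [hθ.1]) (by linarith [hθ.2]) (by linarith [hθ.1])
      have b1 : L * (q - p + δ) ≤ L * (y - x + δ) := by gcongr
      have b2 : lam * η * (q - p) ≤ lam * η * (y - x) := by gcongr
      have b3 : K * (q - p + δ) ≤ K * (y - x + δ) := by gcongr
      have n0 := norm_nonneg (u q - u p)
      rcases le_total 0 (1 - K * (y - x + δ)) with g | g
      · have : ‖u q - u p‖ * (1 - K * (y - x + δ)) ≤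
          V (p - δ + θ) (q + θ) * (1 - K * (q - p + δ)) := by
          apply mul_le_mul v (by linarith) g (n0.trans v)
        have : 0 ≤ ‖u q - u p‖ * δ := by positivity
        linarith
      · have : ‖u q - u p‖ * (1 - K * (y - x + δ)) ≤ 0 := mul_nonpos_of_nonneg_of_nonpos n0 g
        have : 0 ≤ ‖u q - u p‖ * δ := by positivity
        have : 0 ≤ L * δ := by positivity
        linarith
    have t1 : Tendsto (fun δ : ℝ => ‖u q - u p‖ * (1 - K * (y - x + δ))) (nhdsWithin 0 (Ioi 0))
        (nhds (‖u q - u p‖ * (1 - K * (y - x + 0)))) :=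
      (Continuous.tendsto (by fun_prop) 0).mono_left nhdsWithin_le_nhds
    have t2 : Tendsto (fun δ : ℝ => L * (y - x + δ) + lam * η * (y - x) + δ + ‖u q - u p‖ * δ)
        (nhdsWithin 0 (Ioi 0))
        (nhds (L * (y - x + 0) + lam * η * (y - x) + 0 + ‖u q - u p‖ * 0)) :=
      (Continuous.tendsto (by fun_prop) 0).mono_left nhdsWithin_le_nhds
    have := le_of_tendsto_of_tendsto t1 t2 main
    simp only [add_zero, mul_zero] at this
    linarith

lemma RData.final (H : RData c d L K lam u f w z V) {x y : ℝ} (hx : c < x) (hy : y < d)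
    (hxy : x < y) : ‖u y - u x‖ ≤ L * (y - x) := by
  have hK := H.hK
  have hL := H.hL
  have hlam := H.hlam
  set M := 2 * (L + lam * K ^ 2) with hM
  have M0 : 0 ≤ M := by positivity
  have r1' : ∀ s t, c < s → t < d → s < t → K * (t - s) ≤ 1/2 → ‖u t - u s‖ ≤ M * (t - s) := by
    intro s t h1 h2 h3 h4
    have := H.near (r := t - s + 1) (η := K^2) h1 h2 h3 (by linarith) (by positivity)
      (fun p hp q hq _ => H.eta hp hq)
    have n0 := norm_nonneg (u t - u s)
    nlinarith
  have r1 : ∀ s ∈ Ioo c d, ∀ t ∈ Ioo c d, K * |t - s| ≤ 1/2 → ‖u t - u s‖ ≤ M * |t - s| := by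
    intro s hs t ht h
    rcases lt_trichotomy s t with g | g | g
    · rw [abs_of_pos (by linarith)] at *
      exact r1' s t hs.1 ht.2 g h
    · subst g; simp
    · rw [abs_sub_comm] at *
      rw [abs_of_pos (by linarith)] at *
      rw [norm_sub_rev]
      exact r1' t s ht.1 hs.2 g h
  set A := K * (M + L) / lam with hA
  have A0 : 0 ≤ A := by positivity
  have eta2 : ∀ r, K * r ≤ 1/2 → ∀ p ∈ Ioo c d, ∀ q ∈ Ioo c d, |q - p| ≤ r →
      - inner ℝ (w p) (w q) ≤ A * r := by
    intro r hr p hp q hq hpq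
    have e1 : inner ℝ (w p) (w q) = ‖w p‖ ^ 2 + inner ℝ (w p) (w q - w p) := by
      rw [inner_sub_right, real_inner_self_eq_norm_sq]; ring
    have e2 := (abs_le.1 (abs_real_inner_le_norm (w p) (w q - w p))).1
    have e3 : lam • (w q - w p) = (u q - u p) - (f q - f p) := by
      rw [H.hw q, H.hw p, smul_sub]; abel
    have e4 : lam * ‖w q - w p‖ ≤ (M + L) * r := by
      have : ‖lam • (w q - w p)‖ ≤ ‖u q - u p‖ + ‖f q - f p‖ := by rw [e3]; exact norm_sub_le _ _
      rw [norm_smul, Real.norm_of_nonneg hlam.le] at this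
      have k : K * |q - p| ≤ K * r := by gcongr
      have k1 := r1 p hp q hq (by linarith)
      have k2 := H.hf p hp q hq
      have : (M + L) * |q - p| ≤ (M + L) * r := by gcongr
      linarith
    have e5 : ‖w q - w p‖ ≤ (M + L) * r / lam := by
      rw [le_div_iff₀ hlam]; linarith
    have e6 : ‖w p‖ * ‖w q - w p‖ ≤ K * ((M + L) * r / lam) := by
      apply mul_le_mul (H.hwK p hp) e5 (norm_nonneg _) hK
    have : K * ((M + L) * r / lam) = A * r := by rw [hA]; ring
    nlinarith [sq_nonneg ‖w p‖]
  have r2 : ∀ s t, c < s → t < d → s < t → K * (t - s) ≤ 1/4 →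
      ‖u t - u s‖ ≤ L * (t - s) + (2 * lam * A + K * M) * (t - s) ^ 2 := by
    intro s t h1 h2 h3 h4
    have := H.near (r := 2 * (t - s)) (η := A * (2 * (t - s))) h1 h2 h3 (by linarith)
      (by have : 0 ≤ t - s := by linarith
          positivity) (eta2 _ (by linarith))
    have b := r1' s t h1 h2 h3 (by linarith)
    have : K * (t - s) * ‖u t - u s‖ ≤ K * (t - s) * (M * (t - s)) := by
      have : 0 ≤ t - s := by linarith
      gcongr
    nlinarith
  set B := 2 * lam * A + K * M with hB
  have B0 : 0 ≤ B := by positivity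
  have sub : ∀ N : ℕ, 0 < N → K * ((y - x) / N) ≤ 1/4 →
      ‖u y - u x‖ ≤ L * (y - x) + B * (y - x) ^ 2 * (1 / (N : ℝ)) := by
    intro N hN hKN
    have hN' : (0 : ℝ) < N := by exact_mod_cast hN
    set h := (y - x) / N with hh
    have h0 : 0 < h := div_pos (by linarith) hN'
    have hNh : N * h = y - x := by rw [hh]; field_simp
    have ind : ∀ k : ℕ, k ≤ N → ‖u (x + k * h) - u x‖ ≤ k * (L * h + B * h ^ 2) := by
      intro k
      induction k with
      | zero => simp
      | succ k ih =>
        intro hk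
        have i := ih (by omega)
        have hk' : ((k + 1 : ℕ) : ℝ) ≤ N := by exact_mod_cast hk
        push_cast at hk' ⊢
        have kh : (k + 1 : ℝ) * h ≤ N * h := by gcongr
        have k0 : 0 ≤ (k : ℝ) * h := by positivity
        have e : x + (k + 1) * h - (x + k * h) = h := by ring
        have j := r2 (x + k * h) (x + (k + 1) * h) (by linarith) (by linarith) (by linarith)
          (by rw [e]; exact hKN)
        rw [e] at j
        have := norm_sub_le_norm_sub_add_norm_sub (u (x + (k + 1) * h)) (u (x + k * h)) (u x)
        linarith
    have := ind N le_rfl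
    rw [hNh, show x + (y - x) = y by ring] at this
    calc _ ≤ _ := this
      _ = L * (N * h) + B * (N * h) ^ 2 * (1 / N) := by field_simp
      _ = _ := by rw [hNh]
  have t0 : Tendsto (fun N : ℕ => 1 / (N : ℝ)) atTop (nhds 0) := tendsto_one_div_atTop_nhds_zero_nat
  have t1 : Tendsto (fun N : ℕ => L * (y - x) + B * (y - x) ^ 2 * (1 / (N : ℝ))) atTop
      (nhds (L * (y - x) + B * (y - x) ^ 2 * 0)) := (t0.const_mul _).const_add _
  have t2 : Tendsto (fun N : ℕ => K * (y - x) * (1 / (N : ℝ))) atTop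
      (nhds (K * (y - x) * 0)) := t0.const_mul _
  rw [mul_zero] at t2
  rw [mul_zero, add_zero] at t1
  refine ge_of_tendsto t1 ?_
  filter_upwards [eventually_gt_atTop 0, t2.eventually_lt_const (show (0:ℝ) < 1/4 by norm_num)]
    with N h1 h2
  exact sub N h1 (by rw [mul_one_div, mul_div_assoc] at h2; exact h2.le)

end

section
variable {E : Type*} [NormedAddCommGroup E] [InnerProductSpace ℝ E]

lemma eVar_add_le (u v : ℝ → E) (s : Set ℝ) :
    eVariationOn (fun x => u x + v x) s ≤ eVariationOn u s + eVariationOn v s := by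
  apply iSup_le
  rintro ⟨n, ⟨p, hp, ps⟩⟩
  calc (∑ i ∈ Finset.range n, edist (u (p (i + 1)) + v (p (i + 1))) (u (p i) + v (p i)))
      ≤ ∑ i ∈ Finset.range n, (edist (u (p (i + 1))) (u (p i)) + edist (v (p (i + 1))) (v (p i))) :=
        Finset.sum_le_sum fun i _ => edist_add_add_le _ _ _ _
    _ ≤ _ := by
        rw [Finset.sum_add_distrib]
        exact add_le_add (eVariationOn.sum_le hp ps) (eVariationOn.sum_le hp ps)

lemma eVar_smul_le (t : ℝ) (ht : 0 ≤ t) (u : ℝ → E) (s : Set ℝ) :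
    eVariationOn (fun x => t • u x) s ≤ ENNReal.ofReal t * eVariationOn u s := by
  have : LipschitzOnWith (Real.toNNReal t) (fun e : E => t • e) univ := by
    apply LipschitzOnWith.of_dist_le_mul
    intro x _ y _
    rw [dist_smul₀, Real.norm_of_nonneg ht, Real.coe_toNNReal _ ht]
  exact this.comp_eVariationOn_le (mapsTo_univ _ _)

lemma eVar_step_le (a b x : ℝ) (hab : a < b) (hx : x ∈ Ioo a b) (e : E) :
    eVariationOn (fun t => if t ≤ x then e else 0) (Ioo a b) ≤ ENNReal.ofReal ‖e‖ := by
  have h1 : LipschitzOnWith (Real.toNNReal ‖e‖) (fun r : ℝ => e - r • e) univ := by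
    apply LipschitzOnWith.of_dist_le_mul
    intro r _ q _
    rw [dist_eq_norm, Real.coe_toNNReal _ (norm_nonneg _),
      show e - r • e - (e - q • e) = (q - r) • e by rw [sub_smul]; abel, norm_smul,
      Real.dist_eq, Real.norm_eq_abs, abs_sub_comm, mul_comm]
  set g : ℝ → ℝ := fun t => if t ≤ x then 0 else 1 with hg
  have hm : Monotone g := by
    intro p q hpq
    simp only [hg]
    split_ifs <;> first | linarith | norm_num
  have h2 := h1.comp_eVariationOn_le (g := g) (s := Ioo a b) (mapsTo_univ _ _)
  have h3 : eVariationOn g (Ioo a b) ≤ 1 := by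
    have := (hm.monotoneOn univ).eVariationOn_eq (mem_univ a) (mem_univ b)
    calc _ ≤ eVariationOn g (univ ∩ Icc a b) := eVariationOn.mono _ (by
          rw [univ_inter]; exact Ioo_subset_Icc_self)
      _ = _ := this
      _ = 1 := by simp [hg, hx.1.le, hx.2]
  have h4 : (fun t => if t ≤ x then e else 0) = (fun r : ℝ => e - r • e) ∘ g := by
    funext t
    simp only [hg, Function.comp]
    split_ifs <;> simp
  rw [h4]
  refine h2.trans ?_
  calc _ ≤ ENNReal.ofReal ‖e‖ * 1 := by gcongr; rfl
    _ = _ := mul_one _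

lemma eVar_cut_le (a b x y : ℝ) (hx : a < x) (hxy : x ≤ y) (hy : y < b) (u : ℝ → E) :
    eVariationOn (fun t => u t + (if t ≤ x then u y - u x else if t ≤ y then u y - u t else 0))
      (Ioo a b) + eVariationOn u (Icc x y) ≤ eVariationOn u (Ioo a b) := by
  have split : ∀ v : ℝ → E, eVariationOn v (Ioo a b) =
      eVariationOn v (Ioc a x) + eVariationOn v (Icc x y) + eVariationOn v (Ico y b) := by
    intro v
    rw [← eVariationOn.union v (x := x), ← eVariationOn.union v (x := y)]
    · congr 1
      ext t
      simp only [mem_Ioo, mem_union, mem_Ioc, mem_Icc, mem_Ico]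
      constructor
      · intro h
        rcases le_total t x with g | g
        · exact Or.inl (Or.inl ⟨h.1, g⟩)
        · rcases le_total t y with k | k
          · exact Or.inl (Or.inr ⟨g, k⟩)
          · exact Or.inr ⟨k, h.2⟩
      · rintro ((h | h) | h) <;> constructor <;> linarith [h.1, h.2]
    · refine ⟨Or.inr ⟨hxy, le_rfl⟩, ?_⟩
      rintro t (h | h)
      · exact h.2.trans hxy
      · exact h.2
    · exact ⟨⟨le_rfl, hy⟩, fun t h => h.1⟩
    · exact ⟨⟨hx, le_rfl⟩, fun t h => h.2⟩
    · exact ⟨⟨le_rfl, hxy⟩, fun t h => h.1⟩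
  rw [split, split u]
  set v : ℝ → E := fun t => u t + (if t ≤ x then u y - u x else if t ≤ y then u y - u t else 0)
    with hv
  have e1 : eVariationOn v (Ioc a x) ≤ eVariationOn u (Ioc a x) := by
    have : EqOn v (fun t => u t + (fun _ => (u y - u x)) t) (Ioc a x) := by
      intro t ht
      simp [hv, ht.2]
    rw [eVariationOn.congr this]
    refine (eVar_add_le u (fun _ => u y - u x) _).trans ?_
    rw [eVariationOn.constant_on (f := fun _ => u y - u x)]
    · simp
    · rintro _ ⟨_, _, rfl⟩ _ ⟨_, _, rfl⟩; rfl
  have e2 : eVariationOn v (Icc x y) = 0 := by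
    have : EqOn v (fun _ => u y) (Icc x y) := by
      intro t ht
      rcases ht.1.eq_or_lt with h | h
      · subst h; simp [hv]
      · simp [hv, ht.2, not_le.2 h]
    rw [eVariationOn.congr this]
    apply eVariationOn.constant_on
    rintro _ ⟨_, _, rfl⟩ _ ⟨_, _, rfl⟩; rfl
  have e3 : eVariationOn v (Ico y b) = eVariationOn u (Ico y b) := by
    apply eVariationOn.congr
    intro t ht
    rcases ht.1.eq_or_lt with h | h
    · subst h
      rcases hxy.eq_or_lt with g | g
      · subst g; simp [hv]
      · simp [hv, not_le.2 g]
    · simp [hv, not_le.2 h, not_le.2 (hxy.trans_lt h)]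
  rw [e2, e3, add_zero, add_assoc, add_comm (eVariationOn u (Ico y b)), ← add_assoc]
  gcongr

end

lemma sq_memLp {n : ℕ} {w : ℝ → EuclideanSpace ℝ (Fin n)} {S : Set ℝ} (hw : Measurable w) :
    SqIntOn w S ↔ MemLp w 2 (volume.restrict S) :=
  (memLp_two_iff_integrable_sq_norm hw.aestronglyMeasurable).symm

lemma inner_integrable {n : ℕ} {g h : ℝ → EuclideanSpace ℝ (Fin n)} {μ : Measure ℝ}
    (hg : MemLp g 2 μ) (hh : MemLp h 2 μ) : Integrable (fun x => inner ℝ (g x) (h x)) μ := by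
  refine Integrable.mono' (hg.norm.integrable_mul hh.norm)
    (hg.aestronglyMeasurable.inner hh.aestronglyMeasurable) ?_
  filter_upwards with x
  exact norm_inner_le_norm _ _

lemma firstvar {n : ℕ} {a b lam : ℝ} (hlam : 0 < lam)
    {f u w : ℝ → EuclideanSpace ℝ (Fin n)} (hf_meas : Measurable f)
    (hf_sq : SqIntOn f (Set.Ioo a b)) (hu : IsMinimizer lam a b f u)
    (huV : eVariationOn u (Ioo a b) ≠ ⊤)
    (hw : Measurable w) (hw2 : SqIntOn w (Ioo a b)) (hwV : eVariationOn w (Ioo a b) ≠ ⊤) :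
    (eVariationOn u (Ioo a b)).toReal ≤ (eVariationOn w (Ioo a b)).toReal +
      (1 / lam) * ∫ x in Ioo a b, inner ℝ (u x - f x) (w x - u x) := by
  obtain ⟨hum, hu2, hmin⟩ := hu
  set μ := volume.restrict (Ioo a b) with hμ
  have Lf := (sq_memLp hf_meas).1 hf_sq
  have Lu := (sq_memLp hum).1 hu2
  have Lw := (sq_memLp hw).1 hw2
  have Lg : MemLp (fun x => u x - f x) 2 μ := Lu.sub Lf
  have Lp : MemLp (fun x => w x - u x) 2 μ := Lw.sub Lu
  set P := ∫ x in Ioo a b, inner ℝ (u x - f x) (w x - u x) with hP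
  set Q := ∫ x in Ioo a b, ‖w x - u x‖ ^ 2 with hQ
  set G := ∫ x in Ioo a b, ‖u x - f x‖ ^ 2 with hG
  set A := (eVariationOn u (Ioo a b)).toReal with hA
  set B := (eVariationOn w (Ioo a b)).toReal with hB
  have key : ∀ t ∈ Ioo (0:ℝ) 1, A ≤ B + (1 / lam) * P + t * ((1 / (2 * lam)) * Q) := by
    intro t ht
    have hm : Measurable (fun x => (1 - t) • u x + t • w x) := by
      fun_prop
    have hs0 : MemLp (fun x => (1 - t) • u x + t • w x) 2 μ := by
      have g1 : MemLp (fun x => (1 - t) • u x) 2 μ := Lu.const_smul (1 - t)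
      have g2 : MemLp (fun x => t • w x) 2 μ := Lw.const_smul t
      exact g1.add g2
    have hs : SqIntOn (fun x => (1 - t) • u x + t • w x) (Ioo a b) := (sq_memLp hm).2 hs0
    have hE := hmin _ hm hs
    unfold rofEnergy at hE
    have v1 : eVariationOn (fun x => (1 - t) • u x + t • w x) (Ioo a b) ≤
        ENNReal.ofReal ((1 - t) * A + t * B) := by
      refine (eVar_add_le _ _ _).trans ((add_le_add (eVar_smul_le _ (by linarith [ht.2]) u _)
        (eVar_smul_le t ht.1.le w _)).trans ?_)
      rw [ENNReal.ofReal_add, ENNReal.ofReal_mul, ENNReal.ofReal_mul ht.1.le, hA, hB,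
        ENNReal.ofReal_toReal huV, ENNReal.ofReal_toReal hwV]
      · linarith [ht.2]
      · exact mul_nonneg (by linarith [ht.2]) ENNReal.toReal_nonneg
      · exact mul_nonneg ht.1.le ENNReal.toReal_nonneg
    have i1 : ∫ x in Ioo a b, ‖(1 - t) • u x + t • w x - f x‖ ^ 2 = G + 2 * t * P + t ^ 2 * Q := by
      have : ∀ x, ‖(1 - t) • u x + t • w x - f x‖ ^ 2 = ‖u x - f x‖ ^ 2 +
          2 * t * inner ℝ (u x - f x) (w x - u x) + t ^ 2 * ‖w x - u x‖ ^ 2 := by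
        intro x
        have : (1 - t) • u x + t • w x - f x = (u x - f x) + t • (w x - u x) := by
          rw [sub_smul, smul_sub, one_smul]; abel
        rw [this, norm_add_sq_real, norm_smul, inner_smul_right, mul_pow, Real.norm_eq_abs, sq_abs]
        ring
      simp_rw [this]
      have j1 : Integrable (fun x => ‖u x - f x‖ ^ 2) μ := Lg.integrable_norm_pow (by norm_num)
      have j2 : Integrable (fun x => ‖w x - u x‖ ^ 2) μ := Lp.integrable_norm_pow (by norm_num)
      have j3 := inner_integrable Lg Lp
      have j4 : Integrable (fun x => ‖u x - f x‖ ^ 2 +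
          2 * t * inner ℝ (u x - f x) (w x - u x)) μ := j1.add (j3.const_mul _)
      rw [integral_add j4 (j2.const_mul _), integral_add j1 (j3.const_mul _),
        integral_const_mul, integral_const_mul]
    rw [i1] at hE
    have G0 : 0 ≤ G := integral_nonneg fun x => by positivity
    have T0 : 0 ≤ (1 - t) * A + t * B := add_nonneg
      (mul_nonneg (by linarith [ht.2]) ENNReal.toReal_nonneg)
      (mul_nonneg ht.1.le ENNReal.toReal_nonneg)
    have F0 : 0 ≤ G + 2 * t * P + t ^ 2 * Q := by
      rw [← i1]; exact integral_nonneg fun x => by positivity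
    have hE2 := hE.trans (add_le_add_left v1 _)
    rw [← ENNReal.ofReal_toReal huV, ← hA, ← ENNReal.ofReal_add ENNReal.toReal_nonneg (by positivity),
      ← ENNReal.ofReal_add T0 (by positivity), ENNReal.ofReal_le_ofReal_iff (by positivity)] at hE2
    have e1 : 1 / (2 * lam) * (G + 2 * t * P + t ^ 2 * Q) =
      1 / (2 * lam) * G + t * (1 / lam * P) + t * (t * (1 / (2 * lam) * Q)) := by
      field_simp
    rw [e1] at hE2
    have : t * A ≤ t * (B + (1 / lam) * P + t * ((1 / (2 * lam)) * Q)) := by linarith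
    exact le_of_mul_le_mul_left this ht.1
  have t1 : Tendsto (fun t : ℝ => B + (1 / lam) * P + t * ((1 / (2 * lam)) * Q))
      (nhdsWithin 0 (Ioi 0)) (nhds (B + (1 / lam) * P + 0 * ((1 / (2 * lam)) * Q))) :=
    (Continuous.tendsto (by fun_prop) 0).mono_left nhdsWithin_le_nhds
  rw [zero_mul, add_zero] at t1
  refine ge_of_tendsto t1 ?_
  filter_upwards [Ioo_mem_nhdsGT (show (0:ℝ) < 1 by norm_num)] with t ht
  exact key t ht

lemma tv_finite {n : ℕ} {a b lam : ℝ}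
    {f u : ℝ → EuclideanSpace ℝ (Fin n)} (hu : IsMinimizer lam a b f u) :
    eVariationOn u (Ioo a b) ≠ ⊤ := by
  have h := hu.2.2 (fun _ => 0) measurable_const (by simp [SqIntOn])
  unfold rofEnergy at h
  rw [eVariationOn.constant_on (f := fun _ => (0 : EuclideanSpace ℝ (Fin n)))] at h
  · rw [zero_add] at h
    exact ne_top_of_le_ne_top ENNReal.ofReal_ne_top (le_self_add.trans h)
  · rintro _ ⟨_, _, rfl⟩ _ ⟨_, _, rfl⟩; rfl

lemma mkData {n : ℕ} {a b lam : ℝ} (hab : a < b) (hlam : 0 < lam)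
    {f u : ℝ → EuclideanSpace ℝ (Fin n)} (hf_meas : Measurable f)
    (hf_sq : SqIntOn f (Set.Ioo a b)) (hu : IsMinimizer lam a b f u)
    {c d : ℝ} (hcd : c < d) (hU : Set.Ioo c d ⊆ Set.Ioo a b)
    {L : ℝ} (hL : 0 ≤ L)
    (hfLip : ∀ x ∈ Set.Ioo c d, ∀ y ∈ Set.Ioo c d, ‖f y - f x‖ ≤ L * |y - x|) :
    ∃ K w z V, RData c d L K lam u f w z V := by
  have huV := tv_finite hu
  set T := (eVariationOn u (Ioo a b)).toReal with hT
  have T0 : 0 ≤ T := ENNReal.toReal_nonneg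
  have hum := hu.1
  have Lf := (sq_memLp hf_meas).1 hf_sq
  have Lu := (sq_memLp hum).1 hu.2.1
  have Lg : MemLp (fun x => u x - f x) 2 (volume.restrict (Ioo a b)) := Lu.sub Lf
  set w : ℝ → EuclideanSpace ℝ (Fin n) := fun t => (1 / lam) • (u t - f t) with hw
  have Lw : MemLp w 2 (volume.restrict (Ioo a b)) := Lg.const_smul (1 / lam)
  have toI : ∀ {F : Type} [NormedAddCommGroup F] (g : ℝ → F), Integrable g (volume.restrict (Ioo a b)) →
      ∀ x ∈ Icc a b, ∀ y ∈ Icc a b, IntervalIntegrable g volume x y := by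
    intro F _ g hg x hx y hy
    have h : IntervalIntegrable g volume a b := by
      rw [intervalIntegrable_iff_integrableOn_Ioo_of_le hab.le]; exact hg
    apply h.mono_set
    rw [uIcc_of_le hab.le]
    exact uIcc_subset_Icc hx hy
  have Iw : ∀ x ∈ Icc a b, ∀ y ∈ Icc a b, IntervalIntegrable w volume x y :=
    toI w (Lw.integrable (by norm_num))
  set z : ℝ → EuclideanSpace ℝ (Fin n) := fun x => ∫ t in a..x, w t with hz
  set V : ℝ → ℝ → ℝ := fun s t => (eVariationOn u (Icc s t)).toReal with hV
  have ma : a ∈ Icc a b := ⟨le_rfl, hab.le⟩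
  have mb : b ∈ Icc a b := ⟨hab.le, le_rfl⟩
  have zin : ∀ (e : EuclideanSpace ℝ (Fin n)), ∀ x ∈ Icc a b,
      ∫ t in a..x, inner ℝ (w t) e = inner ℝ (z x) e := by
    intro e x hx
    have := (innerSL ℝ e).intervalIntegral_comp_comm (Iw a ma x hx)
    rw [real_inner_comm]
    simp only [innerSL_apply_apply] at this
    rw [← this]
    congr 1
    funext t
    exact real_inner_comm _ _
  -- first variation with perturbation
  have FV : ∀ φ : ℝ → EuclideanSpace ℝ (Fin n), Measurable φ → 
      MemLp φ 2 (volume.restrict (Ioo a b)) →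
      eVariationOn (fun t => u t + φ t) (Ioo a b) ≠ ⊤ →
      (∀ x ∈ Icc a b, ∀ y ∈ Icc a b, IntervalIntegrable (fun t => inner ℝ (w t) (φ t)) volume x y) ∧
      T ≤ (eVariationOn (fun t => u t + φ t) (Ioo a b)).toReal +
        ∫ t in a..b, inner ℝ (w t) (φ t) := by
    intro φ hφ hφ2 hφV
    refine ⟨toI _ (inner_integrable Lw hφ2), ?_⟩
    have := firstvar hlam hf_meas hf_sq hu huV (hum.add hφ)
      ((sq_memLp (hum.add hφ)).2 (Lu.add hφ2)) hφV
    refine this.trans (le_of_eq ?_)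
    congr 1
    rw [intervalIntegral.integral_of_le hab.le, integral_Ioc_eq_integral_Ioo,
      ← integral_const_mul]
    congr 1
    funext t
    simp [hw, inner_smul_left]
  have Iu : ∀ s t, a < s → t < b → Icc s t ⊆ Ioo a b := fun s t h1 h2 p hp =>
    ⟨h1.trans_le hp.1, hp.2.trans_lt h2⟩
  have Vfin : ∀ s t, a < s → t < b → eVariationOn u (Icc s t) ≠ ⊤ := fun s t h1 h2 =>
    ne_top_of_le_ne_top huV (eVariationOn.mono u (Iu s t h1 h2))
  have hVV : ∀ s t p q, a < s → t < b → s ≤ p → p ≤ t → s ≤ q → q ≤ t → ‖u p - u q‖ ≤ V s t := by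
    intro s t p q h1 h2 h3 h4 h5 h6
    rw [← dist_eq_norm]
    exact BoundedVariationOn.dist_le (Vfin s t h1 h2) ⟨h3, h4⟩ ⟨h5, h6⟩
  -- |z| ≤ 1
  have hz1 : ∀ x ∈ Ioo a b, ‖z x‖ ≤ 1 := by
    intro x hx
    have mx : x ∈ Icc a b := Ioo_subset_Icc_self hx
    set e := - z x with he
    set φ : ℝ → EuclideanSpace ℝ (Fin n) := fun t => if t ≤ x then e else 0 with hφ
    have m : Measurable φ := Measurable.ite measurableSet_Iic measurable_const measurable_const
    have m2 : MemLp φ 2 (volume.restrict (Ioo a b)) := by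
      apply MemLp.of_bound m.aestronglyMeasurable ‖e‖
      filter_upwards with t
      simp only [hφ]
      split_ifs <;> simp
    have v1 : eVariationOn (fun t => u t + φ t) (Ioo a b) ≤ ENNReal.ofReal (T + ‖e‖) := by
      refine (eVar_add_le u φ _).trans ?_
      rw [ENNReal.ofReal_add T0 (norm_nonneg _), hT, ENNReal.ofReal_toReal huV]
      gcongr
      exact eVar_step_le a b x hab hx e
    obtain ⟨ii, hh⟩ := FV φ m m2 (ne_top_of_le_ne_top ENNReal.ofReal_ne_top v1)
    have v2 := ENNReal.toReal_le_of_le_ofReal (by positivity) v1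
    rw [← intervalIntegral.integral_add_adjacent_intervals (ii a ma x mx) (ii x mx b mb)] at hh
    have c1 : ∫ t in a..x, inner ℝ (w t) (φ t) = inner ℝ (z x) e := by
      rw [← zin e x mx]
      apply intervalIntegral.integral_congr
      intro t ht
      rw [uIcc_of_le hx.1.le] at ht
      simp [hφ, ht.2]
    have c2 : ∫ t in x..b, inner ℝ (w t) (φ t) = 0 := by
      rw [show (0:ℝ) = ∫ t in x..b, (0:ℝ) by simp]
      apply intervalIntegral.integral_congr_ae
      filter_upwards with t ht
      rw [uIoc_of_le hx.2.le] at ht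
      simp [hφ, not_le.2 ht.1]
    rw [c1, c2, he, inner_neg_right, real_inner_self_eq_norm_sq] at hh
    rw [he, norm_neg] at v2
    by_contra hc
    push Not at hc
    nlinarith
  have cut : ∀ x y, a < x → x ≤ y → y < b → V x y ≤ inner ℝ (z x) (u y - u x) +
      ∫ t in x..y, inner ℝ (w t) (u y - u t) := by
    intro x y hx hxy hy
    have mx : x ∈ Icc a b := ⟨hx.le, by linarith⟩
    have my : y ∈ Icc a b := ⟨by linarith, hy.le⟩
    set φ : ℝ → EuclideanSpace ℝ (Fin n) := fun t => if t ≤ x then u y - u x else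
      if t ≤ y then u y - u t else 0 with hφ
    have m : Measurable φ := Measurable.ite measurableSet_Iic measurable_const
      (Measurable.ite measurableSet_Iic (measurable_const.sub hum) measurable_const)
    have m2 : MemLp φ 2 (volume.restrict (Ioo a b)) := by
      apply MemLp.of_bound m.aestronglyMeasurable (V x y)
      filter_upwards with t
      simp only [hφ]
      split_ifs with h1 h2
      · exact hVV x y y x hx hy hxy le_rfl le_rfl hxy
      · exact hVV x y y t hx hy hxy le_rfl (not_le.1 h1).le h2
      · simp [hV]
    have v1 := eVar_cut_le a b x y hx hxy hy u
    have vf : eVariationOn (fun t => u t + φ t) (Ioo a b) ≠ ⊤ :=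
      ne_top_of_le_ne_top huV (le_self_add.trans v1)
    obtain ⟨ii, hh⟩ := FV φ m m2 vf
    have v2 := ENNReal.toReal_mono huV v1
    rw [ENNReal.toReal_add vf (Vfin x y hx hy)] at v2
    rw [← intervalIntegral.integral_add_adjacent_intervals (ii a ma y my) (ii y my b mb),
      ← intervalIntegral.integral_add_adjacent_intervals (ii a ma x mx) (ii x mx y my)] at hh
    have c1 : ∫ t in a..x, inner ℝ (w t) (φ t) = inner ℝ (z x) (u y - u x) := by
      rw [← zin _ x mx]
      apply intervalIntegral.integral_congr
      intro t ht
      rw [uIcc_of_le hx.le] at ht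
      simp [hφ, ht.2]
    have c2 : ∫ t in x..y, inner ℝ (w t) (φ t) = ∫ t in x..y, inner ℝ (w t) (u y - u t) := by
      apply intervalIntegral.integral_congr_ae
      filter_upwards with t ht
      rw [uIoc_of_le hxy] at ht
      simp [hφ, ht.2, not_le.2 ht.1]
    have c3 : ∫ t in y..b, inner ℝ (w t) (φ t) = 0 := by
      rw [show (0:ℝ) = ∫ t in y..b, (0:ℝ) by simp]
      apply intervalIntegral.integral_congr_ae
      filter_upwards with t ht
      rw [uIoc_of_le hy.le] at ht
      simp [hφ, not_le.2 ht.1, not_le.2 (hxy.trans_lt ht.1)]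
    rw [c1, c2, c3] at hh
    simp only [hV]
    linarith
  -- the constant
  obtain ⟨m, hm⟩ : ∃ m, m ∈ Ioo c d := nonempty_Ioo.2 hcd
  set K0 := (1 / lam) * (‖u m - f m‖ + T + L * (d - c)) with hK0
  have dc : 0 < d - c := by linarith
  have K00 : 0 ≤ K0 := by positivity
  have wK : ∀ t ∈ Ioo c d, ‖w t‖ ≤ K0 := by
    intro t ht
    simp only [hw, norm_smul, hK0]
    rw [Real.norm_of_nonneg (by positivity)]
    gcongr
    have e1 : u t - f t = (u m - f m) + (u t - u m) - (f t - f m) := by abel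
    have e2 : ‖u t - u m‖ ≤ T := by
      rw [← dist_eq_norm]
      exact BoundedVariationOn.dist_le huV (hU ht) (hU hm)
    have e3 := hfLip m hm t ht
    have e4 : L * |t - m| ≤ L * (d - c) := by
      gcongr
      rw [abs_le]
      constructor <;> linarith [ht.1, ht.2, hm.1, hm.2]
    rw [e1]
    refine (norm_sub_le _ _).trans ?_
    have := norm_add_le (u m - f m) (u t - u m)
    linarith
  have zz : ∀ x ∈ Icc a b, ∀ y ∈ Icc a b, z y - z x = ∫ t in x..y, w t := by
    intro x hx y hy
    exact intervalIntegral.integral_interval_sub_left (Iw a ma y hy) (Iw a ma x hx)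
  have ca : ∀ t ∈ Ioo c d, t ∈ Icc a b := fun t ht => Ioo_subset_Icc_self (hU ht)
  refine ⟨2 * K0, w, z, V, ?_⟩
  refine { hL := hL, hK := by positivity, hlam := hlam, hV := ?_, hVm := ?_, hw := ?_, hwK := ?_, hwi := ?_, hz := ?_, hz1 := fun x hx => hz1 x (hU hx), h3 := ?_, hf := hfLip }
  · intro s t p q h1 h2 h3 h4 h5 h6
    exact hVV s t p q (hU ⟨h1, by linarith⟩).1 (hU ⟨by linarith, h2⟩).2 h3 h4 h5 h6
  · intro s t s' t' h1 h2 h3 h4 h5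
    apply ENNReal.toReal_mono (Vfin s t (hU ⟨h1, by linarith⟩).1 (hU ⟨by linarith, h2⟩).2)
    exact eVariationOn.mono u (Icc_subset_Icc h3 h5)
  · intro t
    simp only [hw, smul_smul]
    rw [mul_one_div_cancel hlam.ne', one_smul]; abel
  · intro t ht
    linarith [wK t ht]
  · intro x hx y hy
    exact Iw x (ca x hx) y (ca y hy)
  · intro x hx y hy
    exact zz x (ca x hx) y (ca y hy)
  · intro s x t h1 h2 h3 h4
    have ms : s ∈ Ioo c d := ⟨h1, by linarith⟩
    have mx : x ∈ Ioo c d := ⟨by linarith, by linarith⟩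
    have mt : t ∈ Ioo c d := ⟨by linarith, h4⟩
    have h := cut s t (hU ms).1 (h2.trans h3) (hU mt).2
    have V0 : 0 ≤ V s t := ENNReal.toReal_nonneg
    have b1 : ‖z s - z x‖ ≤ K0 * (t - s) := by
      rw [norm_sub_rev, zz s (ca s ms) x (ca x mx)]
      calc _ ≤ K0 * |x - s| := by
            apply intervalIntegral.norm_integral_le_of_norm_le_const
            intro r hr
            rw [uIoc_of_le h2] at hr
            exact wK r ⟨by linarith [hr.1], by linarith [hr.2]⟩
        _ ≤ _ := by
            rw [abs_of_nonneg (by linarith)]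
            gcongr
    have b2 : ∫ r in s..t, inner ℝ (w r) (u t - u r) ≤ K0 * V s t * (t - s) := by
      calc _ ≤ ‖∫ r in s..t, inner ℝ (w r) (u t - u r)‖ := le_abs_self _
        _ ≤ K0 * V s t * |t - s| := by
            apply intervalIntegral.norm_integral_le_of_norm_le_const
            intro r hr
            rw [uIoc_of_le (h2.trans h3)] at hr
            refine (norm_inner_le_norm _ _).trans ?_
            apply mul_le_mul (wK r ⟨by linarith [hr.1], by linarith [hr.2]⟩) _ (norm_nonneg _) K00
            exact hVV s t t r (hU ms).1 (hU mt).2 (by linarith) le_rfl hr.1.le hr.2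
        _ = _ := by rw [abs_of_nonneg (by linarith)]
    have b3 : inner ℝ (z s) (u t - u s) ≤ inner ℝ (z x) (u t - u s) + K0 * (t - s) * V s t := by
      have : inner ℝ (z s) (u t - u s) = inner ℝ (z x) (u t - u s) +
        inner ℝ (z s - z x) (u t - u s) := by rw [inner_sub_left]; ring
      rw [this]
      gcongr
      refine (real_inner_le_norm _ _).trans ?_
      have : 0 ≤ t - s := by linarith
      apply mul_le_mul b1 _ (norm_nonneg _) (by positivity)
      exact hVV s t t s (hU ms).1 (hU mt).2 (by linarith) le_rfl le_rfl (by linarith)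
    linarith

/-- if the datum `f` is Lipschitz with constant `L` on an open subinterval
`U = Ioo c d` of `I`, then the ROF minimizer has a representative (equal to `u` a.e. on `I`)
which is Lipschitz with the same constant `L` on `U`. -/
theorem minimizer_lipschitz_of_datum_lipschitz
    {n : ℕ} (hn : 1 ≤ n) (a b : ℝ) (hab : a < b) (lam : ℝ) (hlam : 0 < lam)
    (f : ℝ → EuclideanSpace ℝ (Fin n)) (hf_meas : Measurable f)
    (hf_sq : SqIntOn f (Set.Ioo a b))
    (u : ℝ → EuclideanSpace ℝ (Fin n)) (hu : IsMinimizer lam a b f u)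
    (c d : ℝ) (hU : Set.Ioo c d ⊆ Set.Ioo a b)
    (L : ℝ) (hL : 0 ≤ L)
    (hfLip : ∀ x ∈ Set.Ioo c d, ∀ y ∈ Set.Ioo c d, ‖f y - f x‖ ≤ L * |y - x|) :
    ∃ ubar : ℝ → EuclideanSpace ℝ (Fin n),
      (∀ᵐ x ∂(MeasureTheory.volume.restrict (Set.Ioo a b)), ubar x = u x) ∧
      ∀ x ∈ Set.Ioo c d, ∀ y ∈ Set.Ioo c d, ‖ubar y - ubar x‖ ≤ L * |y - x| := by
  refine ⟨u, Filter.Eventually.of_forall fun _ => rfl, ?_⟩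
  intro x hx y hy
  obtain ⟨K, w, z, V, H⟩ := mkData hab hlam hf_meas hf_sq hu (hx.1.trans hx.2) hU hL hfLip
  rcases lt_trichotomy x y with h | h | h
  · rw [abs_of_pos (by linarith)]
    exact H.final hx.1 hy.2 h
  · subst h; simp
  · rw [abs_sub_comm, abs_of_pos (by linarith), norm_sub_rev]
    exact H.final hy.1 hx.2 h
end
end
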